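/- Let p = c² − 32d² be a prime with p ≡ 1 (mod 8), c,d > 0, π = c + 4d√2, and let K = ℚ(√(−π)) ⊂ ℂ, the quartic number field generated by a root of X⁴ + 2cX² + p (so K ⊇ ℚ(√2)). Then the 2-Sylow subgroup of Cl(K) is cyclic, and its order h satisfies: h = 1 if (2/p)₄ = −(p/2)₄; h = 2 if (2/p)₄ = (p/2)₄ = −1; and h ≥ 4 if (2/p)₄ = (p/2)₄ = 1. -/

import Mathlib

/-!
Put `π = c + 4d√2`, so that `N(π) = p`, and let `O` be the ring of integers of `K`, with complex
conjugation `σ` over the principal ideal domain `ℤ[√2]`. All that is needed of `O` is that it is a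
Dedekind domain in which `ℤ[√2]` is the ring of `σ`-invariants, and that it contains `Z = √(-π)`
with `σ Z = -Z` (`IsSqrtNeg`).

*Classes of order two.* In `ℤ[√2]` every totally positive unit is a square, since `1 + √2` has
norm `-1`. As `I σ(I)` is generated by an element of `ℤ[√2]`, a Hilbert 90 argument shows that
every class `g` with `g² = 1` contains an ideal whose square is generated by a squarefree element
of `ℤ[√2]`. Such an ideal is a product of ramified primes, and the only primes of `ℤ[√2]` that can
ramify are `π`, which becomes the square of the principal ideal `(Z)`, and `√2`, which ramifies
exactly if `c ≡ 1 (mod 4)`. In that case `(√2) = J²`, and `J` is not principal, because the units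
of relative norm one are `±1`. So the 2-torsion of the class group is trivial for `c ≡ 3 (mod 4)`
and is `{1, [J]}` for `c ≡ 1 (mod 4)`; in both cases the Sylow 2-subgroup is cyclic.

*Is `[J]` a square?* Since `J σ(J) = (√2)` and `2 + √2 = √2 (1 + √2)` is, up to squares of units,
the only totally positive associate of `√2`, the class of `J` is a square if and only if `2 + √2`
is a relative norm from `K`, that is `x² + πe² = (2 + √2)y²` has a solution with `y ≠ 0`. This
forces `2 + √2` to be a square modulo `π`. Conversely, if `2 + √2` is a square modulo `π`,
Minkowski's theorem on products of linear forms gives `v² - (2 + √2)u² = κπ` with `|N(κ)| ≤ 3√2`.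
Hence `|N(κ)| ≤ 4`, and the possible `κ` are units times powers of `√2`; all of these are norms
from `ℚ(√(2 + √2))`, hence so is `-π`, which is the required equation.

*Symbols.* Reciprocity for Jacobi symbols gives `(2/p)₄ = (-2/c)`, that `2 + √2` is a square
modulo `π` if and only if `c ≡ ±1 (mod 8)`, and `(p/2)₄ = (2/c)`. So the three cases of the
theorem are `c ≡ 3 (mod 4)`, `c ≡ 5 (mod 8)` and `c ≡ 1 (mod 8)`.
-/

/- STATEMENT 13: Let p = c² − 32d² be prime, p ≡ 1 (mod 8), c,d > 0, π = c + 4d√2, and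
K = ℚ(√(−π)) ⊂ ℂ (the quartic field generated by a square root z of −π, a root of
X⁴ + 2cX² + p). Then the 2-Sylow subgroup of Cl(K) is cyclic of order h with:
h = 1 if (2/p)₄ = −(p/2)₄; h = 2 if (2/p)₄ = (p/2)₄ = −1; h ≥ 4 if (2/p)₄ = (p/2)₄ = 1. -/

open Complex NumberField IntermediateField nonZeroDivisors

noncomputable section

/-- K = ℚ(√(−π)) = ℚ(z) as a subfield of ℂ, where z² = −π. -/
def Kfield (z : ℂ) : IntermediateField ℚ ℂ := ℚ⟮z⟯

/-! ### Ring-theoretic preliminaries -/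

section Preliminaries

lemma isPrincipalIdealRing_of_exists_sub_mul_lt {R : Type*} [CommRing R] (f : R → ℕ)
    (hf : ∀ a b : R, b ≠ 0 → ∃ q, f (a - b * q) < f b) : IsPrincipalIdealRing R := by
  refine ⟨fun I => ?_⟩
  rcases eq_or_ne I ⊥ with rfl | hI
  · exact bot_isPrincipal
  · let S : Set R := {x | x ∈ I ∧ x ≠ 0}
    have hS : S.Nonempty := Submodule.exists_mem_ne_zero_of_ne_bot hI
    set b := Function.argminOn f S hS
    obtain ⟨hbI, hb0⟩ : b ∈ S := Function.argminOn_mem f S hS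
    refine ⟨b, le_antisymm (fun a ha => ?_) ((Ideal.span_singleton_le_iff_mem I).2 hbI)⟩
    obtain ⟨q, hq⟩ := hf a b hb0
    have hrem : a - b * q = 0 := by
      by_contra h
      exact Function.not_lt_argminOn f S ⟨I.sub_mem ha (I.mul_mem_right q hbI), h⟩ hq
    exact Ideal.mem_span_singleton.2 ⟨q, sub_eq_zero.1 hrem⟩

lemma exists_sq_mul_squarefree {M : Type*} [CommMonoidWithZero M] [WfDvdMonoid M] (a : M)
    (ha : a ≠ 0) : ∃ k s : M, Squarefree s ∧ a = k ^ 2 * s := by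
  induction a using (wellFounded_dvdNotUnit (α := M)).induction with
  | _ a ih =>
    by_cases hs : Squarefree a
    · exact ⟨1, a, hs, by rw [one_pow, one_mul]⟩
    · simp only [Squarefree, not_forall] at hs
      obtain ⟨x, ⟨b, rfl⟩, hx⟩ := hs
      have hb : b ≠ 0 := right_ne_zero_of_mul ha
      obtain ⟨k, s, hs, rfl⟩ :=
        ih b ⟨hb, x * x, fun h => hx (isUnit_of_mul_isUnit_left h), mul_comm _ _⟩ hb
      exact ⟨x * k, s, hs, by rw [mul_pow, ← sq, mul_assoc]⟩

lemma dvd_of_sq_sub_mul_add_eq_zero {O : Type*} [CommRing O] [IsDomain O] [IsIntegrallyClosed O]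
    {g w a b : O} (h : w ^ 2 - g * a * w + g ^ 2 * b = 0) : g ∣ w := by
  rcases eq_or_ne g 0 with rfl | hg
  · rw [zero_mul, zero_mul, sub_zero, zero_pow two_ne_zero, zero_mul, add_zero] at h
    rw [pow_eq_zero_iff two_ne_zero |>.1 h]
  let φ := algebraMap O (FractionRing O)
  have hg' : φ g ≠ 0 := (FaithfulSMul.algebraMap_eq_zero_iff _ _).not.2 hg
  have hint : IsIntegral O (φ w / φ g) := by
    refine ⟨Polynomial.X ^ 2 - Polynomial.C a * Polynomial.X + Polynomial.C b, by monicity!, ?_⟩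
    have h' := congrArg φ h
    simp only [map_add, map_sub, map_mul, map_pow, map_zero] at h'
    simp only [Polynomial.eval₂_add, Polynomial.eval₂_sub, Polynomial.eval₂_mul,
      Polynomial.eval₂_pow, Polynomial.eval₂_X, Polynomial.eval₂_C]
    field_simp
    linear_combination h'
  obtain ⟨y, hy⟩ := IsIntegrallyClosed.isIntegral_iff.1 hint
  refine ⟨y, IsFractionRing.injective O (FractionRing O) ?_⟩
  rw [map_mul, hy, mul_div_cancel₀ _ hg']

lemma dvd_mul_of_dvd_mul_of_dvd_add {O : Type*} [CommRing O] [IsDomain O] [IsIntegrallyClosed O]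
    {x y x' y' g : O} (h₁ : g ∣ x * x') (h : g ∣ x * y' + y * x') (h₂ : g ∣ y * y') :
    g ∣ x * y' := by
  obtain ⟨a₁, ha₁⟩ := h₁
  obtain ⟨a, ha⟩ := h
  obtain ⟨a₂, ha₂⟩ := h₂
  apply dvd_of_sq_sub_mul_add_eq_zero (a := a) (b := a₁ * a₂)
  linear_combination x * y' * ha - g * a₂ * ha₁ - x * x' * ha₂

/-- A form of Gauss's lemma for the product of `x + yT` and `x' + y'T`. -/
lemma span_pair_mul_span_pair_eq_span_singleton {O : Type*} [CommRing O] [IsDomain O]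
    [IsIntegrallyClosed O] {x y x' y' g : O}
    (h : Ideal.span {x * x', x * y' + y * x', y * y'} = Ideal.span {g}) :
    Ideal.span {x, y} * Ideal.span {x', y'} = Ideal.span {g} := by
  have hdvd (w : O) (hw : w ∈ ({x * x', x * y' + y * x', y * y'} : Set O)) : g ∣ w :=
    Ideal.mem_span_singleton.1 (h ▸ Ideal.subset_span hw)
  have h₁ := hdvd (x * x') (by simp)
  have h₂ := hdvd (x * y' + y * x') (by simp)
  have h₃ := hdvd (y * y') (by simp)
  rw [Ideal.span_pair_mul_span_pair]
  apply le_antisymm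
  · simp only [Ideal.span_le, Set.insert_subset_iff, Set.singleton_subset_iff, SetLike.mem_coe,
      Ideal.mem_span_singleton]
    exact ⟨h₁, dvd_mul_of_dvd_mul_of_dvd_add h₁ h₂ h₃,
      dvd_mul_of_dvd_mul_of_dvd_add h₃ (add_comm (x * y') _ ▸ h₂) h₁, h₃⟩
  · rw [← h]
    simp only [Ideal.span_le, Set.insert_subset_iff, Set.singleton_subset_iff, SetLike.mem_coe]
    exact ⟨Ideal.subset_span (by simp),
      Ideal.add_mem _ (Ideal.subset_span (by simp)) (Ideal.subset_span (by simp)),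
      Ideal.subset_span (by simp)⟩

lemma uniqueFactorizationMonoid_pow_injective {M : Type*} [CommMonoidWithZero M]
    [UniqueFactorizationMonoid M] [Subsingleton Mˣ] {x y : M} {n : ℕ} (hn : n ≠ 0)
    (h : x ^ n = y ^ n) : x = y :=
  dvd_antisymm ((UniqueFactorizationMonoid.pow_dvd_pow_iff_dvd hn).1 h.dvd)
    ((UniqueFactorizationMonoid.pow_dvd_pow_iff_dvd hn).1 h.symm.dvd)

lemma isUnit_or_associated_of_squarefree {M : Type*} [CommMonoidWithZero M] [Nontrivial M]
    [UniqueFactorizationMonoid M] {r s : M} (hr : Prime r) (hs : Squarefree s)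
    (h : ∀ l, Prime l → l ∣ s → Associated l r) : IsUnit s ∨ Associated r s := by
  refine or_iff_not_imp_left.2 fun hu => ?_
  obtain ⟨l, hl, hls⟩ := WfDvdMonoid.exists_irreducible_factor hu hs.ne_zero
  obtain ⟨q, rfl⟩ : r ∣ s := (h l hl.prime hls).symm.dvd.trans hls
  suffices hq : IsUnit q from associated_mul_unit_right r q hq
  by_contra hq
  obtain ⟨l', hl', hlq⟩ :=
    WfDvdMonoid.exists_irreducible_factor hq (right_ne_zero_of_mul hs.ne_zero)
  have hrl := (h l' hl'.prime (hlq.mul_left _)).symm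
  exact hr.not_isUnit (hs r (mul_dvd_mul_left _ (hrl.dvd.trans hlq)))

end Preliminaries

/-! ### Arithmetic of `ℤ[√2]` -/

section ZsqrtTwo

lemma two_ne_mul_self (n : ℤ) : 2 ≠ n * n := by
  intro h
  have h₁ : n < 2 := by nlinarith
  have h₂ : -2 < n := by nlinarith
  interval_cases n <;> omega

lemma zsqrtTwo_norm_eq_zero {a : ℤ√2} : a.norm = 0 ↔ a = 0 :=
  Zsqrtd.norm_eq_zero two_ne_mul_self a

instance isDomain_zsqrtTwo : IsDomain (ℤ√2) := by
  have : NoZeroDivisors (ℤ√2) := ⟨fun {a b} h => by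
    simpa only [Zsqrtd.norm_mul, Zsqrtd.norm_zero, mul_eq_zero, zsqrtTwo_norm_eq_zero]
      using congrArg Zsqrtd.norm h⟩
  exact NoZeroDivisors.to_isDomain _

lemma abs_sub_round_sq_sub_two_mul_lt_one (x y : ℚ) :
    |(x - round x) ^ 2 - 2 * (y - round y) ^ 2| < 1 := by
  obtain ⟨hx, hx'⟩ := abs_le.1 (abs_sub_round x)
  obtain ⟨hy, hy'⟩ := abs_le.1 (abs_sub_round y)
  rw [abs_lt]
  constructor <;> nlinarith

lemma zsqrtTwo_exists_norm_sub_mul_lt (a b : ℤ√2) (hb : b ≠ 0) :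
    ∃ q : ℤ√2, (a - b * q).norm.natAbs < b.norm.natAbs := by
  -- the exact quotient is `w / n = x + y√2`; round both coordinates
  let w : ℤ√2 := a * star b
  let n : ℤ := b.norm
  let x : ℚ := w.re / n
  let y : ℚ := w.im / n
  let q : ℤ√2 := ⟨round x, round y⟩
  have hn : (n : ℚ) ≠ 0 := Int.cast_ne_zero.2 (zsqrtTwo_norm_eq_zero.not.2 hb)
  have hconj : (a - b * q).norm * n = (w - (n : ℤ√2) * q).norm := by
    have hmul : w - (n : ℤ√2) * q = (a - b * q) * star b := by
      rw [Zsqrtd.norm_eq_mul_conj b]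
      ring
    rw [hmul, Zsqrtd.norm_mul, Zsqrtd.norm_conj]
  have hnorm : ((a - b * q).norm : ℚ) = n * ((x - round x) ^ 2 - 2 * (y - round y) ^ 2) := by
    apply mul_right_cancel₀ hn
    have hre : (w.re : ℚ) = n * x := (mul_div_cancel₀ _ hn).symm
    have him : (w.im : ℚ) = n * y := (mul_div_cancel₀ _ hn).symm
    rw [← Int.cast_mul, hconj, Zsqrtd.norm_def]
    simp only [Zsqrtd.re_sub, Zsqrtd.im_sub, Zsqrtd.re_smul, Zsqrtd.im_smul, q]
    push_cast
    rw [hre, him]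
    ring
  have hlt : |((a - b * q).norm : ℚ)| < |(n : ℚ)| := by
    rw [hnorm, abs_mul]
    exact mul_lt_of_lt_one_right (abs_pos.2 hn) (abs_sub_round_sq_sub_two_mul_lt_one x y)
  refine ⟨q, ?_⟩
  zify
  exact_mod_cast hlt

instance isPrincipalIdealRing_zsqrtTwo : IsPrincipalIdealRing (ℤ√2) :=
  isPrincipalIdealRing_of_exists_sub_mul_lt (fun a => a.norm.natAbs) zsqrtTwo_exists_norm_sub_mul_lt

/-- The real place `a + b√2 ↦ a + b√2` of `ℤ[√2]`. -/
def realPlace : ℤ√2 →+* ℝ := Zsqrtd.lift ⟨√2, by simp⟩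

/-- The conjugate real place `a + b√2 ↦ a - b√2` of `ℤ[√2]`. -/
def realPlace' : ℤ√2 →+* ℝ := Zsqrtd.lift ⟨-√2, by simp⟩

lemma realPlace_apply (a : ℤ√2) : realPlace a = a.re + a.im * √2 := by
  simp [realPlace]

lemma realPlace'_apply (a : ℤ√2) : realPlace' a = a.re - a.im * √2 := by
  simp [realPlace', sub_eq_add_neg]

lemma realPlace_injective : Function.Injective realPlace :=
  Zsqrtd.lift_injective _ two_ne_mul_self

lemma realPlace'_injective : Function.Injective realPlace' :=
  Zsqrtd.lift_injective _ two_ne_mul_self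

lemma norm_eq_realPlace_mul_realPlace' (a : ℤ√2) : (a.norm : ℝ) = realPlace a * realPlace' a := by
  have h2 : √2 ^ 2 = (2 : ℝ) := by simp
  rw [realPlace_apply, realPlace'_apply, Zsqrtd.norm_def]
  push_cast
  linear_combination (a.im : ℝ) ^ 2 * h2

/-- Total positivity in `ℤ[√2]`: positivity at both real places. -/
def TotPos (a : ℤ√2) : Prop := 0 < realPlace a ∧ 0 < realPlace' a

lemma TotPos.norm_pos {a : ℤ√2} (h : TotPos a) : 0 < a.norm := by
  have : (0 : ℝ) < a.norm := norm_eq_realPlace_mul_realPlace' a ▸ mul_pos h.1 h.2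
  exact_mod_cast this

lemma totPos_of_re_pos_of_norm_pos {a : ℤ√2} (hre : 0 < a.re) (hn : 0 < a.norm) : TotPos a := by
  have hmul : 0 < realPlace a * realPlace' a := by
    rw [← norm_eq_realPlace_mul_realPlace']
    exact_mod_cast hn
  have hadd : realPlace a + realPlace' a = 2 * a.re := by
    rw [realPlace_apply, realPlace'_apply]
    ring
  have hre' : (0 : ℝ) < a.re := by exact_mod_cast hre
  exact (pos_and_pos_or_neg_and_neg_of_mul_pos hmul).resolve_right
    fun h => by linarith [h.1, h.2]

lemma TotPos.of_mul_right {a b : ℤ√2} (hab : TotPos (a * b)) (hb : TotPos b) : TotPos a := by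
  rw [TotPos, map_mul, map_mul] at hab
  exact ⟨(pos_iff_pos_of_mul_pos hab.1).2 hb.1, (pos_iff_pos_of_mul_pos hab.2).2 hb.2⟩

lemma totPos_sq {a : ℤ√2} (ha : a ≠ 0) : TotPos (a ^ 2) := by
  rw [TotPos, map_pow, map_pow]
  exact ⟨sq_pos_of_ne_zero ((map_ne_zero_iff _ realPlace_injective).2 ha),
    sq_pos_of_ne_zero ((map_ne_zero_iff _ realPlace'_injective).2 ha)⟩

lemma zsqrtTwo_isUnit_iff {u : ℤ√2} : IsUnit u ↔ u.norm = 1 ∨ u.norm = -1 := by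
  rw [Zsqrtd.isUnit_iff_norm_isUnit, Int.isUnit_iff]

/-- The fundamental solution `3 + 2√2 = (1 + √2)²` of the Pell equation `x² - 2y² = 1`. -/
def pellTwo : Pell.Solution₁ 2 := Pell.Solution₁.mk 3 2 (by norm_num)

lemma pellTwo_isFundamental : Pell.IsFundamental pellTwo := by
  refine ⟨by simp [pellTwo], by simp [pellTwo], fun {b} hb => ?_⟩
  have hprop := b.prop
  simp only [pellTwo, Pell.Solution₁.x_mk]
  by_contra! h
  have hx : b.x = 2 := by omega
  rw [hx] at hprop
  omega

lemma coe_pellTwo_zpow {e : (ℤ√2)ˣ} (he : (e : ℤ√2) = ⟨1, 1⟩) (n : ℤ) :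
    ((pellTwo ^ n : Pell.Solution₁ 2) : ℤ√2) = ((e ^ n : (ℤ√2)ˣ) : ℤ√2) ^ 2 := by
  let f : Pell.Solution₁ 2 →* ℤ√2 := Submonoid.subtype _
  have hf : f.toHomUnits pellTwo = e ^ 2 := by
    ext1
    rw [MonoidHom.coe_toHomUnits, Units.val_pow_eq_pow_val, he]
    rfl
  calc f (pellTwo ^ n) = (f.toHomUnits (pellTwo ^ n) : ℤ√2) :=
        (MonoidHom.coe_toHomUnits f _).symm
    _ = ((e ^ n : (ℤ√2)ˣ) : ℤ√2) ^ 2 := by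
        rw [map_zpow, hf, ← Units.val_pow_eq_pow_val, ← zpow_natCast, ← zpow_natCast, zpow_comm]

lemma exists_isUnit_eq_sq_or_eq_neg_sq_of_norm_eq_one {u : ℤ√2} (hu : u.norm = 1) :
    ∃ w : ℤ√2, IsUnit w ∧ (u = w ^ 2 ∨ u = -w ^ 2) := by
  have hpell : u.re ^ 2 - 2 * u.im ^ 2 = 1 := by
    rw [Zsqrtd.norm_def] at hu
    linarith
  obtain ⟨e, he⟩ : IsUnit (⟨1, 1⟩ : ℤ√2) := zsqrtTwo_isUnit_iff.2 (Or.inr rfl)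
  obtain ⟨n, hn⟩ :=
    pellTwo_isFundamental.eq_zpow_or_neg_zpow (Pell.Solution₁.mk u.re u.im hpell)
  refine ⟨(e ^ n : (ℤ√2)ˣ), Units.isUnit _, ?_⟩
  rw [← coe_pellTwo_zpow he]
  exact hn.imp (congrArg Subtype.val) (congrArg Subtype.val)

/-- The point is that `1 + √2` has norm `-1`. -/
lemma TotPos.exists_isUnit_eq_sq {u : ℤ√2} (h : TotPos u) (hu : IsUnit u) :
    ∃ w : ℤ√2, IsUnit w ∧ u = w ^ 2 := by
  have hnorm : u.norm = 1 :=
    (zsqrtTwo_isUnit_iff.1 hu).resolve_right fun h' => by linarith [h.norm_pos]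
  obtain ⟨w, hw, hsq | hneg⟩ := exists_isUnit_eq_sq_or_eq_neg_sq_of_norm_eq_one hnorm
  · exact ⟨w, hw, hsq⟩
  · have hw' := (totPos_sq hw.ne_zero).1
    have hu' := h.1
    rw [hneg, map_neg] at hu'
    linarith

lemma prime_of_prime_natAbs_norm {a : ℤ√2} (h : a.norm.natAbs.Prime) : Prime a := by
  refine irreducible_iff_prime.1 ⟨fun hu => ?_, fun x y hxy => ?_⟩
  · exact h.ne_one (Zsqrtd.norm_eq_one_iff.2 hu)
  · rw [hxy, Zsqrtd.norm_mul, Int.natAbs_mul, Nat.prime_mul_iff] at h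
    exact h.symm.imp (fun h => Zsqrtd.norm_eq_one_iff.1 h.2) fun h => Zsqrtd.norm_eq_one_iff.1 h.2

lemma sqrtd_two_sq : (Zsqrtd.sqrtd : ℤ√2) ^ 2 = 2 := rfl

lemma prime_sqrtd_two : Prime (Zsqrtd.sqrtd : ℤ√2) := prime_of_prime_natAbs_norm Nat.prime_two

lemma sqrtd_two_dvd_iff {a : ℤ√2} : Zsqrtd.sqrtd ∣ a ↔ 2 ∣ a.re := by
  constructor
  · rintro ⟨b, rfl⟩
    simp
  · rintro ⟨k, hk⟩
    exact ⟨⟨a.im, k⟩, by ext <;> simp [hk]⟩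

/-- Note that `2 + √2 = √2 (1 + √2)`. -/
lemma TotPos.exists_isUnit_eq_two_add_sqrtd_mul_sq {n : ℤ√2} (h : TotPos n)
    (hn : Associated Zsqrtd.sqrtd n) : ∃ w : ℤ√2, IsUnit w ∧ n = ⟨2, 1⟩ * w ^ 2 := by
  obtain ⟨u, rfl⟩ := hn
  have hε : (⟨1, 1⟩ * ⟨-1, 1⟩ : ℤ√2) = 1 := rfl
  have hmul : (Zsqrtd.sqrtd * (u : ℤ√2) : ℤ√2) = ⟨-1, 1⟩ * u * ⟨2, 1⟩ := by
    have : (⟨2, 1⟩ : ℤ√2) = Zsqrtd.sqrtd * ⟨1, 1⟩ := rfl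
    rw [this]
    linear_combination (-(Zsqrtd.sqrtd : ℤ√2) * u) * hε
  have hpos : TotPos (⟨-1, 1⟩ * u : ℤ√2) :=
    (hmul ▸ h).of_mul_right (totPos_of_re_pos_of_norm_pos (by norm_num) (by decide))
  obtain ⟨w, hw, hw2⟩ :=
    hpos.exists_isUnit_eq_sq ((IsUnit.of_mul_eq_one_right _ hε).mul u.isUnit)
  exact ⟨w, hw, by rw [hmul, hw2, mul_comm]⟩

lemma eq_zero_of_sq_add_mul_sq_eq_four {π t s : ℤ√2} (hpos : TotPos π) (h17 : 17 ≤ π.norm)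
    (h : t ^ 2 + π * s ^ 2 = 4) : s = 0 := by
  by_contra hs
  have hplace (ρ : ℤ√2 →+* ℝ) : ρ (π * s ^ 2) ≤ 4 := by
    rw [eq_sub_iff_add_eq'.2 h, map_sub, map_pow, map_ofNat]
    linarith [sq_nonneg (ρ t)]
  have hnorm : ((π * s ^ 2).norm : ℝ) ≤ 4 * 4 := by
    rw [norm_eq_realPlace_mul_realPlace']
    refine mul_le_mul (hplace _) (hplace _) ?_ (by norm_num)
    rw [map_mul]
    exact (mul_pos hpos.2 (totPos_sq hs).2).le
  have hs1 : 1 ≤ (s ^ 2).norm := (totPos_sq hs).norm_pos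
  have hnorm' : π.norm * (s ^ 2).norm ≤ 16 := by
    rw [← Zsqrtd.norm_mul]
    exact_mod_cast (by linarith : ((π * s ^ 2).norm : ℝ) ≤ 16)
  nlinarith

lemma not_dvd_four_mul_of_associated_sqrtd {π n : ℤ√2} (hπ : Prime π) (h17 : 17 ≤ π.norm)
    (hn : Associated n Zsqrtd.sqrtd) : ¬π ∣ 4 * n := by
  intro hdvd
  have hπr : π ∣ Zsqrtd.sqrtd := by
    rcases hπ.dvd_or_dvd hdvd with h4 | hn'
    · exact hπ.dvd_of_dvd_pow (n := 4) h4
    · exact hn'.trans hn.dvd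
  have hnorm : π.norm ∣ 2 := by
    exact (map_dvd Zsqrtd.normMonoidHom hπr).trans (neg_dvd.1 dvd_rfl)
  linarith [Int.le_of_dvd two_pos hnorm]

end ZsqrtTwo

/-! ### Ideal classes and conjugation -/

section IdealClass

variable {O : Type*} [CommRing O] [IsDedekindDomain O]

/-- The class of a nonzero ideal in the class group: `ClassGroup.mk0` with the ideal and the proof
that it is nonzero as separate arguments. -/
def idealClass (I : Ideal O) (hI : I ≠ ⊥) : ClassGroup O :=
  ClassGroup.mk0 ⟨I, mem_nonZeroDivisors_iff_ne_zero.2 hI⟩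

lemma idealClass_mul {I J : Ideal O} (hI : I ≠ ⊥) (hJ : J ≠ ⊥) :
    idealClass (I * J) (mul_ne_zero hI hJ) = idealClass I hI * idealClass J hJ := by
  rw [idealClass, idealClass, idealClass, ← map_mul]
  rfl

lemma idealClass_eq_one_iff {I : Ideal O} (hI : I ≠ ⊥) :
    idealClass I hI = 1 ↔ ∃ x, I = Ideal.span {x} := by
  rw [idealClass, ClassGroup.mk0_eq_one_iff]
  exact ⟨fun h => h.principal, fun h => ⟨h⟩⟩

lemma idealClass_span_singleton {x : O} (hx : Ideal.span {x} ≠ ⊥) :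
    idealClass (Ideal.span {x}) hx = 1 :=
  (idealClass_eq_one_iff hx).2 ⟨x, rfl⟩

lemma idealClass_sq_eq_one {I : Ideal O} (hI : I ≠ ⊥) {x : O} (hIx : I ^ 2 = Ideal.span {x}) :
    idealClass I hI ^ 2 = 1 := by
  rw [sq, ← idealClass_mul hI hI, idealClass_eq_one_iff]
  exact ⟨x, (sq I).symm.trans hIx⟩

lemma idealClass_surjective (g : ClassGroup O) :
    ∃ (I : Ideal O) (hI : I ≠ ⊥), idealClass I hI = g := by
  obtain ⟨⟨I, hI⟩, h⟩ := ClassGroup.mk0_surjective g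
  exact ⟨I, mem_nonZeroDivisors_iff_ne_zero.1 hI, h⟩

end IdealClass

/-- `σ` is the conjugation of an extension `O` of degree at most two of `R`: an involution whose
fixed ring is `R`. -/
structure IsConjugation {R O : Type*} [CommRing R] [CommRing O] [Algebra R O]
    (σ : O ≃ₐ[R] O) : Prop where
  involutive : Function.Involutive σ
  exists_algebraMap_eq : ∀ x, σ x = x → ∃ a, algebraMap R O a = x

namespace IsConjugation

variable {R O : Type*} [CommRing R] [CommRing O] [Algebra R O] {σ : O ≃ₐ[R] O}

lemma exists_trace (hσ : IsConjugation σ) (x : O) : ∃ t, algebraMap R O t = x + σ x :=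
  hσ.exists_algebraMap_eq _ (by rw [map_add, hσ.involutive, add_comm])

lemma exists_norm (hσ : IsConjugation σ) (x : O) : ∃ n, algebraMap R O n = x * σ x :=
  hσ.exists_algebraMap_eq _ (by rw [map_mul, hσ.involutive, mul_comm])

lemma map_map (hσ : IsConjugation σ) (I : Ideal O) : (I.map σ).map σ = I := by
  have hcomp : (σ : O →+* O).comp (σ : O →+* O) = RingHom.id O := RingHom.ext hσ.involutive
  change (I.map (σ : O →+* O)).map (σ : O →+* O) = I
  rw [Ideal.map_map, hcomp, Ideal.map_id]

lemma map_ne_bot {I : Ideal O} (hI : I ≠ ⊥) : I.map σ ≠ ⊥ :=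
  (Ideal.map_eq_bot_iff_of_injective σ.injective).not.2 hI

lemma map_span_singleton (x : O) : (Ideal.span {x}).map σ = Ideal.span {σ x} := by
  rw [Ideal.map_span, Set.image_singleton]

section Domain

variable [FaithfulSMul R O]

lemma algebraMap_ne_zero {a : R} (ha : a ≠ 0) : algebraMap R O a ≠ 0 :=
  (FaithfulSMul.algebraMap_eq_zero_iff R O).not.2 ha

/-- Hilbert 90: take `β = n + γ`, unless this vanishes. -/
lemma exists_sq_eq_mul_algebraMap (hσ : IsConjugation σ) {γ : O} {n : R} (hn : n ≠ 0)
    (hγ : γ * σ γ = algebraMap R O n ^ 2) :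
    ∃ (β : O) (τ : R), β ≠ 0 ∧ β ^ 2 = γ * algebraMap R O τ := by
  by_cases hβ : algebraMap R O n + γ = 0
  · refine ⟨algebraMap R O n, -n, algebraMap_ne_zero hn, ?_⟩
    rw [map_neg]
    linear_combination algebraMap R O n * hβ
  · obtain ⟨t, ht⟩ := hσ.exists_trace γ
    refine ⟨algebraMap R O n + γ, t + 2 * n, hβ, ?_⟩
    rw [map_add, ht, map_mul, map_ofNat]
    linear_combination -hγ

variable [IsDomain O]

lemma dvd_of_algebraMap_dvd (hσ : IsConjugation σ) {a b : R}
    (h : algebraMap R O a ∣ algebraMap R O b) : a ∣ b := by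
  obtain ⟨y, hy⟩ := h
  rcases eq_or_ne a 0 with rfl | ha
  · rw [map_zero, zero_mul, FaithfulSMul.algebraMap_eq_zero_iff] at hy
    rw [hy]
  · have hfix : σ y = y := by
      have h := congrArg σ hy
      rw [map_mul, σ.commutes, σ.commutes, hy] at h
      exact (mul_left_cancel₀ (algebraMap_ne_zero ha) h).symm
    obtain ⟨c, rfl⟩ := hσ.exists_algebraMap_eq y hfix
    exact ⟨c, FaithfulSMul.algebraMap_injective R O (by rw [hy, map_mul])⟩

lemma associated_of_span_algebraMap_eq [IsDomain R] (hσ : IsConjugation σ) {a b : R}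
    (h : Ideal.span {algebraMap R O a} = Ideal.span {algebraMap R O b}) : Associated a b := by
  rw [Ideal.span_singleton_eq_span_singleton] at h
  exact associated_of_dvd_dvd (hσ.dvd_of_algebraMap_dvd h.dvd)
    (hσ.dvd_of_algebraMap_dvd h.symm.dvd)

lemma dvd_norm_of_dvd_sq (hσ : IsConjugation σ) {l n : R} {x : O} (hl : Prime l)
    (hn : algebraMap R O n = x * σ x) (hx : algebraMap R O l ∣ x ^ 2) : l ∣ n := by
  refine hl.dvd_of_dvd_pow (n := 2) (hσ.dvd_of_algebraMap_dvd ?_)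
  rw [map_pow, hn, mul_pow]
  exact hx.mul_right _

lemma dvd_trace_of_dvd_sq (hσ : IsConjugation σ) {l t : R} {x : O} (hl : Prime l)
    (ht : algebraMap R O t = x + σ x) (hx : algebraMap R O l ∣ x ^ 2) : l ∣ t := by
  obtain ⟨n, hn⟩ := hσ.exists_norm x
  have hσx : algebraMap R O l ∣ σ x ^ 2 := by
    simpa only [σ.commutes, map_pow] using map_dvd σ hx
  refine hl.dvd_of_dvd_pow (n := 2) (hσ.dvd_of_algebraMap_dvd ?_)
  rw [map_pow, ht, add_sq, mul_assoc, ← hn]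
  exact dvd_add (dvd_add hx
    ((map_dvd _ (hσ.dvd_norm_of_dvd_sq hl hn hx)).mul_left _)) hσx

/-- The hypothesis on `l` says that `O / (l)` is reduced. -/
lemma not_dvd_of_forall_dvd_of_dvd_sq (hσ : IsConjugation σ) {l s : R} (hl : Prime l)
    (hred : ∀ x, algebraMap R O l ∣ x ^ 2 → algebraMap R O l ∣ x) (hs : Squarefree s) {J : Ideal O}
    (hJ : J ^ 2 = Ideal.span {algebraMap R O s}) : ¬l ∣ s := by
  intro hls
  have hJl : J ≤ Ideal.span {algebraMap R O l} := fun x hx => by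
    have hx2 : x ^ 2 ∈ Ideal.span {algebraMap R O s} := hJ ▸ Ideal.pow_mem_pow hx 2
    rw [Ideal.mem_span_singleton] at hx2 ⊢
    exact hred x ((map_dvd _ hls).trans hx2)
  have hsl := Ideal.pow_right_mono hJl 2
  rw [hJ, Ideal.span_singleton_pow, Ideal.span_singleton_le_span_singleton, ← map_pow, sq] at hsl
  exact hl.not_isUnit (hs _ (hσ.dvd_of_algebraMap_dvd hsl))

end Domain

section DedekindDomain

variable [IsDedekindDomain O]

lemma exists_mul_map_eq_span [IsPrincipalIdealRing R] (hσ : IsConjugation σ) {I : Ideal O}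
    (hI : I ≠ ⊥) : ∃ n : R, n ≠ 0 ∧ I * I.map σ = Ideal.span {algebraMap R O n} := by
  obtain ⟨x, hxI, hx⟩ := Submodule.exists_mem_ne_zero_of_ne_bot hI
  obtain ⟨y, rfl⟩ := IsDedekindDomain.exists_eq_span_pair hxI hx
  obtain ⟨n₁, hn₁⟩ := hσ.exists_norm x
  obtain ⟨n₂, hn₂⟩ := hσ.exists_norm y
  obtain ⟨t, ht⟩ := hσ.exists_trace (x * σ y)
  rw [map_mul, hσ.involutive, mul_comm (σ x)] at ht
  obtain ⟨g, hg : Ideal.span {n₁, t, n₂} = Ideal.span {g}⟩ :=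
    (IsPrincipalIdealRing.principal (Ideal.span {n₁, t, n₂})).principal
  have hmul : Ideal.span {x, y} * (Ideal.span {x, y}).map σ = Ideal.span {algebraMap R O g} := by
    rw [Ideal.map_span, Set.image_pair]
    apply span_pair_mul_span_pair_eq_span_singleton
    have hg' := congrArg (Ideal.map (algebraMap R O)) hg
    rw [Ideal.map_span, Ideal.map_span, Set.image_insert_eq, Set.image_pair,
      Set.image_singleton] at hg'
    rw [← hn₁, ← ht, ← hn₂, hg']
  refine ⟨g, ?_, hmul⟩
  rintro rfl
  rw [map_zero, Ideal.span_singleton_zero] at hmul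
  exact mul_ne_zero hI (map_ne_bot hI) hmul

lemma idealClass_mul_idealClass_map [IsPrincipalIdealRing R] (hσ : IsConjugation σ) {I : Ideal O}
    (hI : I ≠ ⊥) : idealClass I hI * idealClass (I.map σ) (map_ne_bot hI) = 1 := by
  obtain ⟨n, -, hn⟩ := hσ.exists_mul_map_eq_span hI
  rw [← idealClass_mul, idealClass_eq_one_iff]
  exact ⟨_, hn⟩

lemma exists_squarefree_of_sq_eq_span [FaithfulSMul R O] [IsDomain R] [WfDvdMonoid R]
    (hσ : IsConjugation σ) {I : Ideal O} (hI : I ≠ ⊥) {γ : O} (hIγ : I ^ 2 = Ideal.span {γ})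
    {n : R} (hn : n ≠ 0) (hγ : γ * σ γ = algebraMap R O n ^ 2) :
    ∃ (J : Ideal O) (hJ : J ≠ ⊥) (s : R), Squarefree s ∧ J ^ 2 = Ideal.span {algebraMap R O s} ∧
      idealClass I hI * idealClass J hJ = 1 := by
  obtain ⟨β, τ, hβ, hβτ⟩ := hσ.exists_sq_eq_mul_algebraMap hn hγ
  have hτ : τ ≠ 0 := by
    rintro rfl
    rw [map_zero, mul_zero] at hβτ
    exact hβ ((pow_eq_zero_iff two_ne_zero).1 hβτ)
  obtain ⟨k, s, hs, rfl⟩ := exists_sq_mul_squarefree τ hτ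
  have hk : algebraMap R O k ≠ 0 :=
    algebraMap_ne_zero ((pow_ne_zero_iff two_ne_zero).1 (left_ne_zero_of_mul hτ))
  have hspan : Ideal.span {β} ^ 2 =
      (I * Ideal.span {algebraMap R O k}) ^ 2 * Ideal.span {algebraMap R O s} := by
    rw [Ideal.span_singleton_pow, hβτ, mul_pow, hIγ, Ideal.span_singleton_pow,
      Ideal.span_singleton_mul_span_singleton, Ideal.span_singleton_mul_span_singleton, map_mul,
      map_pow, mul_assoc]
  obtain ⟨J, hJ⟩ : I * Ideal.span {algebraMap R O k} ∣ Ideal.span {β} :=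
    (UniqueFactorizationMonoid.pow_dvd_pow_iff_dvd two_ne_zero).1 ⟨_, hspan⟩
  have hk' : Ideal.span {algebraMap R O k} ≠ ⊥ := Ideal.span_singleton_eq_bot.not.2 hk
  have hIk := mul_ne_zero hI hk'
  have hβ' : Ideal.span {β} ≠ ⊥ := Ideal.span_singleton_eq_bot.not.2 hβ
  have hJ0 : J ≠ ⊥ := right_ne_zero_of_mul (hJ ▸ hβ')
  refine ⟨J, hJ0, s, hs, ?_, ?_⟩
  · apply mul_left_cancel₀ (pow_ne_zero 2 hIk)
    rw [← hspan, hJ, ← mul_pow]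
  · have hclass : idealClass (I * Ideal.span {algebraMap R O k} * J) (mul_ne_zero hIk hJ0) = 1 :=
      (idealClass_eq_one_iff _).2 ⟨β, hJ.symm⟩
    rwa [idealClass_mul hIk hJ0, idealClass_mul hI hk', idealClass_span_singleton,
      mul_one] at hclass

end DedekindDomain

end IsConjugation

/-! ### The ring generated by a square root of `-π` -/

/-- `σ` is a conjugation of `O` over `R` and `Z ∈ O` is a square root of `-π` with `σ Z = -Z`. -/
structure IsSqrtNeg {R O : Type*} [CommRing R] [CommRing O] [Algebra R O] (σ : O ≃ₐ[R] O) (π : R)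
    (Z : O) : Prop extends IsConjugation σ where
  map_eq_neg : σ Z = -Z
  sq_eq : Z ^ 2 = -algebraMap R O π

namespace IsSqrtNeg

section Domain

variable {R O : Type*} [CommRing R] [CommRing O] [Algebra R O]
  {σ : O ≃ₐ[R] O} {π : R} {Z : O}

lemma span_sq (h : IsSqrtNeg σ π Z) :
    Ideal.span {Z} ^ 2 = Ideal.span {algebraMap R O π} := by
  rw [Ideal.span_singleton_pow, h.sq_eq, Ideal.span_singleton_neg]

variable [FaithfulSMul R O]

lemma ne_zero (h : IsSqrtNeg σ π Z) (hπ : π ≠ 0) : Z ≠ 0 := by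
  rintro rfl
  have hsq := h.sq_eq
  rw [zero_pow two_ne_zero, zero_eq_neg] at hsq
  exact IsConjugation.algebraMap_ne_zero hπ hsq

variable [IsDomain R] [IsDomain O]

lemma exists_coords (h : IsSqrtNeg σ π Z) (hπ : Prime π) (x : O) :
    ∃ t s n : R, 2 * x = algebraMap R O t + algebraMap R O s * Z ∧
      algebraMap R O t = x + σ x ∧ algebraMap R O n = x * σ x ∧ 4 * n = t ^ 2 + π * s ^ 2 := by
  obtain ⟨t, ht⟩ := h.exists_trace x
  obtain ⟨n, hn⟩ := h.exists_norm x
  obtain ⟨r, hr⟩ := h.exists_algebraMap_eq (Z * (x - σ x)) (by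
    rw [map_mul, map_sub, h.involutive, h.map_eq_neg, neg_mul, ← mul_neg, neg_sub])
  have hr2 : r ^ 2 = -π * (t ^ 2 - 4 * n) := by
    apply FaithfulSMul.algebraMap_injective R O
    simp only [map_mul, map_sub, map_pow, map_neg, map_ofNat, hr, ht, hn, mul_pow, h.sq_eq]
    ring
  obtain ⟨s, rfl⟩ : π ∣ r :=
    hπ.dvd_of_dvd_pow (n := 2) (hr2 ▸ (dvd_neg.2 dvd_rfl : π ∣ -π).mul_right _)
  refine ⟨t, -s, n, ?_, ht, hn, ?_⟩
  · apply mul_left_cancel₀ (h.ne_zero hπ.ne_zero)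
    rw [map_mul] at hr
    rw [ht, map_neg]
    linear_combination -hr + algebraMap R O s * h.sq_eq
  · apply mul_left_cancel₀ hπ.ne_zero
    linear_combination -hr2

lemma norm_pos (h : IsSqrtNeg σ π Z) (hπ : Prime π) {F : Type*} [Field F] [LinearOrder F]
    [IsStrictOrderedRing F] {ρ : R →+* F} (hρ : Function.Injective ρ) (hρπ : 0 < ρ π) {x : O}
    (hx : x ≠ 0) {n : R} (hn : algebraMap R O n = x * σ x) : 0 < ρ n := by
  obtain ⟨t, s, n', -, -, hn', h4⟩ := h.exists_coords hπ x
  obtain rfl : n = n' := FaithfulSMul.algebraMap_injective R O (hn.trans hn'.symm)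
  have hn0 : n ≠ 0 := by
    rintro rfl
    rw [map_zero] at hn
    exact mul_ne_zero hx ((map_ne_zero_iff _ σ.injective).2 hx) hn.symm
  have h4' : 4 * ρ n = ρ t ^ 2 + ρ π * ρ s ^ 2 := by
    simpa only [map_mul, map_add, map_pow, map_ofNat] using congrArg ρ h4
  have hnonneg : 0 ≤ 4 * ρ n := h4' ▸ by positivity
  exact lt_of_le_of_ne (by linarith) ((map_ne_zero_iff _ hρ).2 hn0).symm

variable [IsIntegrallyClosed O]

lemma dvd_of_dvd_sq (h : IsSqrtNeg σ π Z) (hπ : Prime π) {l : R} (hl : Prime l)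
    (hlπ : ¬Associated l π)
    (hred : ∀ t e n : R, l ∣ t → l ∣ e → l ∣ n → 4 * n = t ^ 2 + π * e ^ 2 → l ^ 2 ∣ n)
    {x : O} (hx : algebraMap R O l ∣ x ^ 2) : algebraMap R O l ∣ x := by
  obtain ⟨t, e, n, -, ht, hn, h4⟩ := h.exists_coords hπ x
  have hln : l ∣ n := h.dvd_norm_of_dvd_sq hl hn hx
  have hlt : l ∣ t := h.dvd_trace_of_dvd_sq hl ht hx
  have hle : l ∣ e := by
    have hmul : l ∣ π * e ^ 2 := by
      rw [← sub_eq_of_eq_add' h4]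
      exact dvd_sub (hln.mul_left _) (hlt.pow two_ne_zero)
    exact hl.dvd_of_dvd_pow
      ((hl.dvd_or_dvd hmul).resolve_left fun hdvd => hlπ (hl.associated_of_dvd hπ hdvd))
  obtain ⟨b, hb⟩ := hred t e n hlt hle hln h4
  obtain ⟨a, rfl⟩ := hlt
  apply dvd_of_sq_sub_mul_add_eq_zero (a := algebraMap R O a) (b := algebraMap R O b)
  rw [← map_mul, ht, ← map_pow, ← map_mul, ← hb, hn]
  ring

lemma dvd_of_dvd_sq_of_not_dvd_two (h : IsSqrtNeg σ π Z) (hπ : Prime π) {l : R} (hl : Prime l)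
    (hl2 : ¬l ∣ 2) (hlπ : ¬Associated l π) {x : O} (hx : algebraMap R O l ∣ x ^ 2) :
    algebraMap R O l ∣ x := by
  refine h.dvd_of_dvd_sq hπ hl hlπ (fun t e n ht he _ h4 => ?_) hx
  have hl4 : ¬l ∣ 4 := fun h4 => hl2 (hl.dvd_of_dvd_pow (n := 2) (by norm_num; exact h4))
  apply hl.pow_dvd_of_dvd_mul_left 2 hl4
  rw [h4]
  exact dvd_add (pow_dvd_pow_of_dvd ht 2) ((pow_dvd_pow_of_dvd he 2).mul_left _)

/-- With `t = r t'`, `e = r e'` and `a = t' - e'`, the equation says that `2n` is congruent to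
`a (a + 2 e')` modulo `4`. -/
lemma dvd_of_dvd_sq_of_sq_eq_two (h : IsSqrtNeg σ π Z) (hπ : Prime π) {r : R} (hr : Prime r)
    (hr2 : r ^ 2 = 2) (hrπ : ¬Associated r π) (hπ4 : 4 ∣ π + 1) {x : O}
    (hx : algebraMap R O r ∣ x ^ 2) : algebraMap R O r ∣ x := by
  refine h.dvd_of_dvd_sq hπ hr hrπ (fun t e n ht he hn h4 => ?_) hx
  have h2 : (2 : R) ≠ 0 := hr2 ▸ pow_ne_zero 2 hr.ne_zero
  have hr2' : r ∣ 2 := hr2 ▸ dvd_pow_self r two_ne_zero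
  obtain ⟨k, hk⟩ := hπ4
  obtain ⟨t, rfl⟩ := ht
  obtain ⟨e, rfl⟩ := he
  have hsum : 2 * n = (t - e) ^ 2 + 2 * (t - e) * e + 4 * k * e ^ 2 := by
    apply mul_left_cancel₀ h2
    linear_combination h4 + (t ^ 2 + π * e ^ 2) * hr2 + 2 * e ^ 2 * hk
  obtain ⟨b, hb⟩ : r ∣ t - e := by
    apply hr.dvd_of_dvd_pow (n := 2)
    have : (t - e) ^ 2 = 2 * (n - (t - e) * e - 2 * k * e ^ 2) := by linear_combination -hsum
    exact this ▸ hr2'.mul_right _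
  have hn' : n = b ^ 2 + r * b * e + r ^ 2 * (k * e ^ 2) := by
    apply mul_left_cancel₀ h2
    rw [hb] at hsum
    linear_combination hsum + (b ^ 2 - 2 * k * e ^ 2) * hr2
  obtain ⟨b, rfl⟩ : r ∣ b := by
    apply hr.dvd_of_dvd_pow (n := 2)
    have : b ^ 2 = n - r * (b * e + r * (k * e ^ 2)) := by linear_combination -hn'
    exact this ▸ dvd_sub hn (dvd_mul_right r _)
  exact ⟨b ^ 2 + b * e + k * e ^ 2, by rw [hn']; ring⟩

/-- The prime factors of `s` ramify in `O`. -/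
lemma associated_of_dvd_of_sq_eq_span (h : IsSqrtNeg σ π Z) (hπ : Prime π) {r : R} (hr : Prime r)
    (hr2 : r ^ 2 = 2) {J : Ideal O} {s l : R} (hJ : J ^ 2 = Ideal.span {algebraMap R O s})
    (hs : Squarefree s) (hl : Prime l) (hls : l ∣ s) :
    Associated l π ∨ (Associated l r ∧ ¬4 ∣ π + 1) := by
  by_contra! hcon
  obtain ⟨hlπ, hlr⟩ := hcon
  by_cases hlr' : Associated l r
  · refine h.not_dvd_of_forall_dvd_of_dvd_sq hr (fun x hx => ?_) hs hJ (hlr'.symm.dvd.trans hls)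
    exact h.dvd_of_dvd_sq_of_sq_eq_two hπ hr hr2 (fun h' => hlπ (hlr'.trans h')) (hlr hlr') hx
  · refine h.not_dvd_of_forall_dvd_of_dvd_sq hl (fun x hx => ?_) hs hJ hls
    refine h.dvd_of_dvd_sq_of_not_dvd_two hπ hl (fun hl2 => hlr' ?_) hlπ hx
    exact hl.associated_of_dvd hr (hl.dvd_of_dvd_pow (hr2 ▸ hl2))

end Domain

section DedekindDomain

variable {R O : Type*} [CommRing R] [CommRing O] [IsDedekindDomain O] [Algebra R O]
  [FaithfulSMul R O] {σ : O ≃ₐ[R] O} {π : R} {Z : O}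

lemma exists_sq_eq_span_not_dvd (h : IsSqrtNeg σ π Z) (hπ : Prime π) {J : Ideal O} (hJ : J ≠ ⊥)
    {s : R} (hs : Squarefree s) (hJs : J ^ 2 = Ideal.span {algebraMap R O s}) :
    ∃ (J₁ : Ideal O) (hJ₁ : J₁ ≠ ⊥) (s₁ : R), Squarefree s₁ ∧ ¬π ∣ s₁ ∧
      J₁ ^ 2 = Ideal.span {algebraMap R O s₁} ∧ idealClass J hJ = idealClass J₁ hJ₁ := by
  by_cases hπs : π ∣ s
  · obtain ⟨s₁, rfl⟩ := hπs
    have hZ : Ideal.span {Z} ≠ ⊥ := Ideal.span_singleton_eq_bot.not.2 (h.ne_zero hπ.ne_zero)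
    have hJZ : J ^ 2 = Ideal.span {Z} ^ 2 * Ideal.span {algebraMap R O s₁} := by
      rw [hJs, h.span_sq, Ideal.span_singleton_mul_span_singleton, map_mul]
    obtain ⟨J₁, rfl⟩ : Ideal.span {Z} ∣ J :=
      (UniqueFactorizationMonoid.pow_dvd_pow_iff_dvd two_ne_zero).1 ⟨_, hJZ⟩
    have hJ₁ : J₁ ≠ ⊥ := right_ne_zero_of_mul hJ
    refine ⟨J₁, hJ₁, s₁, hs.of_mul_right, ?_, ?_, ?_⟩
    · exact fun hdvd => hπ.not_isUnit (hs _ (mul_dvd_mul_left _ hdvd))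
    · exact mul_left_cancel₀ (pow_ne_zero 2 hZ) (by rw [← mul_pow, hJZ])
    · rw [idealClass_mul hZ hJ₁, idealClass_span_singleton, one_mul]
  · exact ⟨J, hJ, s, hs, hπs, hJs, rfl⟩

lemma idealClass_eq_one_or_sq_eq_span [IsDomain R] [UniqueFactorizationMonoid R]
    (h : IsSqrtNeg σ π Z) (hπ : Prime π) {r : R} (hr : Prime r) (hr2 : r ^ 2 = 2) {J : Ideal O}
    (hJ : J ≠ ⊥) {s : R} (hs : Squarefree s) (hJs : J ^ 2 = Ideal.span {algebraMap R O s})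
    (hπs : ¬π ∣ s) :
    idealClass J hJ = 1 ∨ (¬4 ∣ π + 1 ∧ J ^ 2 = Ideal.span {algebraMap R O r}) := by
  have hfactor (l : R) (hl : Prime l) (hls : l ∣ s) : Associated l r ∧ ¬4 ∣ π + 1 :=
    (h.associated_of_dvd_of_sq_eq_span hπ hr hr2 hJs hs hl hls).resolve_left
      fun hlπ => hπs (hlπ.symm.dvd.trans hls)
  rcases isUnit_or_associated_of_squarefree hr hs
    (fun l hl hls => (hfactor l hl hls).1) with hu | hrs
  · refine Or.inl ((idealClass_eq_one_iff hJ).2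
      ⟨1, uniqueFactorizationMonoid_pow_injective two_ne_zero ?_⟩)
    rw [hJs, Ideal.span_singleton_eq_top.2 (hu.map _), Ideal.span_singleton_one, Ideal.top_pow]
  · refine Or.inr ⟨(hfactor r hr hrs.dvd).2, ?_⟩
    rw [hJs, Ideal.span_singleton_eq_span_singleton]
    exact (hrs.map (algebraMap R O)).symm

end DedekindDomain

end IsSqrtNeg

namespace IsSqrtNeg

/-! ### Ambiguous classes over `ℤ[√2]` -/

section ZsqrtTwo

variable {O : Type*} [CommRing O] [Algebra (ℤ√2) O] [FaithfulSMul (ℤ√2) O]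
  {σ : O ≃ₐ[ℤ√2] O} {π : ℤ√2} {Z : O}

lemma norm_totPos [IsDomain O] (h : IsSqrtNeg σ π Z) (hπ : Prime π) (hpos : TotPos π) {x : O}
    (hx : x ≠ 0) {n : ℤ√2} (hn : algebraMap (ℤ√2) O n = x * σ x) : TotPos n :=
  ⟨h.norm_pos hπ realPlace_injective hpos.1 hx hn, h.norm_pos hπ realPlace'_injective hpos.2 hx hn⟩

lemma exists_mul_map_eq_sq [IsDedekindDomain O] (h : IsSqrtNeg σ π Z) (hπ : Prime π)
    (hpos : TotPos π) {I : Ideal O} (hI : I ≠ ⊥) {γ : O} (hIγ : I ^ 2 = Ideal.span {γ}) :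
    ∃ n : ℤ√2, n ≠ 0 ∧ γ * σ γ = algebraMap (ℤ√2) O n ^ 2 := by
  have hγ : γ ≠ 0 := by
    rintro rfl
    exact pow_ne_zero 2 hI (hIγ.trans Ideal.span_singleton_zero)
  obtain ⟨n, hn, hIn⟩ := h.exists_mul_map_eq_span hI
  obtain ⟨m, hm⟩ := h.exists_norm γ
  obtain ⟨u, hu⟩ : Associated (n ^ 2) m := by
    apply h.associated_of_span_algebraMap_eq
    rw [hm, map_pow, ← Ideal.span_singleton_pow, ← hIn, ← Ideal.span_singleton_mul_span_singleton,
      ← IsConjugation.map_span_singleton, ← hIγ, Ideal.map_pow, mul_pow]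
  have hupos : TotPos (u : ℤ√2) := by
    apply TotPos.of_mul_right (b := n ^ 2) _ (totPos_sq hn)
    rw [mul_comm, hu]
    exact h.norm_totPos hπ hpos hγ hm
  obtain ⟨w, hw, huw⟩ := hupos.exists_isUnit_eq_sq u.isUnit
  exact ⟨n * w, mul_ne_zero hn hw.ne_zero, by rw [← hm, ← hu, huw, ← map_pow, mul_pow]⟩

lemma eq_one_or_exists_sq_eq_span_sqrtd [IsDedekindDomain O] (h : IsSqrtNeg σ π Z) (hπ : Prime π)
    (hpos : TotPos π) {g : ClassGroup O} (hg : g ^ 2 = 1) :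
    g = 1 ∨ (¬4 ∣ π + 1 ∧ ∃ (J : Ideal O) (hJ : J ≠ ⊥),
      J ^ 2 = Ideal.span {algebraMap (ℤ√2) O Zsqrtd.sqrtd} ∧ g = idealClass J hJ) := by
  obtain ⟨I, hI, rfl⟩ := idealClass_surjective g
  obtain ⟨γ, hγ⟩ : ∃ γ, I * I = Ideal.span {γ} := by
    rw [← idealClass_eq_one_iff (mul_ne_zero hI hI), idealClass_mul hI hI, ← sq, hg]
  rw [← sq] at hγ
  obtain ⟨n, hn, hγn⟩ := h.exists_mul_map_eq_sq hπ hpos hI hγ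
  obtain ⟨J, hJ, s, hs, hJs, hIJ⟩ := h.exists_squarefree_of_sq_eq_span hI hγ hn hγn
  have hIJ' : idealClass I hI = idealClass J hJ :=
    mul_left_cancel (a := idealClass I hI) (by rw [hIJ, ← sq, hg])
  obtain ⟨J₁, hJ₁, s₁, hs₁, hπs₁, hJ₁s, hJJ₁⟩ := h.exists_sq_eq_span_not_dvd hπ hJ hs hJs
  rw [hIJ', hJJ₁]
  obtain h1 | ⟨h4, hsq⟩ :=
    h.idealClass_eq_one_or_sq_eq_span hπ prime_sqrtd_two sqrtd_two_sq hJ₁ hs₁ hJ₁s hπs₁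
  · exact Or.inl h1
  · exact Or.inr ⟨h4, J₁, hJ₁, hsq, rfl⟩

end ZsqrtTwo

/-! ### The ideal above `√2` -/

/-- The element `ω = (1 + Z) / r` is integral, and the ideal is `(r, 1 + ω)`. -/
lemma exists_sq_eq_span_of_sq_eq_two {R O : Type*} [CommRing R] [CommRing O] [IsDomain O]
    [IsIntegrallyClosed O] [Algebra R O] {σ : O ≃ₐ[R] O} {π : R} {Z r : O} (h : IsSqrtNeg σ π Z)
    (hr : r ≠ 0) (hr2 : r ^ 2 = 2) (hπ4 : 4 ∣ π - 1) : ∃ J : Ideal O, J ^ 2 = Ideal.span {r} := by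
  obtain ⟨k, hk⟩ : ∃ k, algebraMap R O π = 1 + 4 * k := by
    obtain ⟨k, hk⟩ := hπ4
    exact ⟨algebraMap R O k, by rw [sub_eq_iff_eq_add'.1 hk, map_add, map_mul, map_one, map_ofNat]⟩
  have hZ := h.sq_eq
  rw [hk] at hZ
  obtain ⟨ω, hω⟩ : r ∣ 1 + Z := by
    apply dvd_of_sq_sub_mul_add_eq_zero (a := r) (b := 1 + 2 * k)
    linear_combination hZ + (2 * k - Z) * hr2
  have hω2 : ω ^ 2 = r * ω - 1 - 2 * k := by
    apply mul_left_cancel₀ (pow_ne_zero 2 hr)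
    linear_combination hZ - (1 + Z + r * ω) * hω - (Z - 2 * k) * hr2 + r ^ 2 * hω
  have hsq : (1 + ω) * (1 + ω) = r * (r * ω + ω - r * k) := by
    linear_combination hω2 + (k - ω) * hr2
  refine ⟨Ideal.span {r, 1 + ω}, ?_⟩
  rw [sq, Ideal.span_pair_mul_span_pair]
  apply le_antisymm
  · simp only [Ideal.span_le, Set.insert_subset_iff, Set.singleton_subset_iff, SetLike.mem_coe,
      Ideal.mem_span_singleton]
    exact ⟨dvd_mul_right _ _, dvd_mul_right _ _, dvd_mul_left _ _, hsq ▸ dvd_mul_right _ _⟩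
  · rw [Ideal.span_singleton_le_iff_mem]
    have hgen : r = r * (1 + ω) - ((1 + ω) * (1 + ω) - (ω - k) * (r * r)) := by
      linear_combination hsq
    have hmem := Ideal.subset_span (s := {r * r, r * (1 + ω), (1 + ω) * r, (1 + ω) * (1 + ω)})
    have hsub := Ideal.sub_mem _ (hmem (by simp : r * (1 + ω) ∈ _)) (Ideal.sub_mem _
      (hmem (by simp : (1 + ω) * (1 + ω) ∈ _))
      (Ideal.mul_mem_left _ (ω - k) (hmem (by simp : r * r ∈ _))))
    rwa [← hgen] at hsub

variable {O : Type*} [CommRing O] [Algebra (ℤ√2) O] [FaithfulSMul (ℤ√2) O]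
  {σ : O ≃ₐ[ℤ√2] O} {π : ℤ√2} {Z : O}

lemma eq_one_or_eq_neg_one_of_mul_map_eq_one [IsDomain O] (h : IsSqrtNeg σ π Z)
    (hπ : Prime π) (hpos : TotPos π) (h17 : 17 ≤ π.norm) {η : O} (hη : η * σ η = 1) :
    η = 1 ∨ η = -1 := by
  obtain ⟨t, s, n, hts, -, hn, h4⟩ := h.exists_coords hπ η
  obtain rfl : n = 1 := FaithfulSMul.algebraMap_injective (ℤ√2) O (by rw [hn, hη, map_one])
  obtain rfl : s = 0 := eq_zero_of_sq_add_mul_sq_eq_four hpos h17 (by rw [← h4, mul_one])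
  have h2 : (2 : O) ≠ 0 := by
    simpa only [map_ofNat] using
      IsConjugation.algebraMap_ne_zero (O := O) (two_ne_zero : (2 : ℤ√2) ≠ 0)
  have ht : (t - 2) * (t + 2) = 0 := by linear_combination -h4
  rw [map_zero, zero_mul, add_zero] at hts
  rcases mul_eq_zero.1 ht with ht | ht
  · refine Or.inl (mul_left_cancel₀ h2 ?_)
    rw [hts, sub_eq_zero.1 ht, map_ofNat, mul_one]
  · refine Or.inr (mul_left_cancel₀ h2 ?_)
    rw [hts, eq_neg_of_add_eq_zero_left ht, map_neg, map_ofNat, mul_neg_one]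

/-- A generator `γ` of `J` would satisfy `σ γ = ± γ`, so it would lie in `ℤ[√2]` or in `Z ℚ(√2)`,
and its relative norm would not be associated to `√2`. -/
lemma idealClass_ne_one_of_sq_eq_span_sqrtd [IsDedekindDomain O] (h : IsSqrtNeg σ π Z)
    (hπ : Prime π) (hpos : TotPos π) (h17 : 17 ≤ π.norm) {J : Ideal O} (hJ : J ≠ ⊥)
    (hJr : J ^ 2 = Ideal.span {algebraMap (ℤ√2) O Zsqrtd.sqrtd}) : idealClass J hJ ≠ 1 := by
  rw [Ne, idealClass_eq_one_iff]
  rintro ⟨γ, rfl⟩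
  have hσ : Ideal.span {σ γ} = Ideal.span {γ} := by
    apply uniqueFactorizationMonoid_pow_injective two_ne_zero
    rw [← IsConjugation.map_span_singleton, ← Ideal.map_pow, hJr, IsConjugation.map_span_singleton,
      σ.commutes]
  obtain ⟨t, s, n, -, ht, hn, h4⟩ := h.exists_coords hπ γ
  have hnr : Associated n Zsqrtd.sqrtd := by
    apply h.associated_of_span_algebraMap_eq
    rw [hn, ← Ideal.span_singleton_mul_span_singleton, hσ, ← sq, hJr]
  obtain ⟨η, hη⟩ := Ideal.span_singleton_eq_span_singleton.1 hσ.symm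
  have hη1 : (η : O) * σ η = 1 := by
    have hσσ := congrArg σ hη
    rw [h.involutive, map_mul, ← hη] at hσσ
    apply mul_left_cancel₀ (Ideal.span_singleton_eq_bot.not.1 hJ)
    linear_combination hσσ
  rcases h.eq_one_or_eq_neg_one_of_mul_map_eq_one hπ hpos h17 hη1 with hη' | hη'
  · rw [hη', mul_one] at hη
    obtain ⟨g, rfl⟩ := h.exists_algebraMap_eq γ hη.symm
    rw [σ.commutes, ← map_mul] at hn
    exact (hnr.symm.irreducible prime_sqrtd_two.irreducible).not_isSquare
      ⟨g, FaithfulSMul.algebraMap_injective (ℤ√2) O hn⟩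
  · rw [hη', mul_neg_one] at hη
    obtain rfl : t = 0 := FaithfulSMul.algebraMap_injective (ℤ√2) O (by
      rw [ht, ← hη, add_neg_cancel, map_zero])
    refine not_dvd_four_mul_of_associated_sqrtd hπ h17 hnr ⟨s ^ 2, ?_⟩
    rw [h4, zero_pow two_ne_zero, zero_add]

end IsSqrtNeg

/-! ### Residue symbols -/

section Residues

lemma isCoprime_of_squarefree_sq_sub_mul_sq {c d k : ℤ} (h : Squarefree (c ^ 2 - k * d ^ 2)) :
    IsCoprime c d := by
  refine IsRelPrime.isCoprime fun g hc hd => h g ?_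
  rw [← sq]
  exact dvd_sub (pow_dvd_pow_of_dvd hc 2) ((pow_dvd_pow_of_dvd hd 2).mul_left k)

lemma jacobiSym_eq_jacobiSym_natAbs {p : ℕ} (hp4 : p % 4 = 1) {m : ℤ} (hm : Odd m) :
    jacobiSym m p = jacobiSym p m.natAbs := by
  rw [jacobiSym.quadratic_reciprocity_one_mod_four hp4 hm.natAbs]
  rcases m.natAbs_eq with h | h
  · rw [← h]
  · nth_rw 1 [h]
    rw [jacobiSym.neg _ (Nat.odd_iff.2 (Nat.odd_of_mod_four_eq_one hp4)),
      ZMod.χ₄_nat_one_mod_four hp4, one_mul]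

lemma jacobiSym_two_eq_one {p : ℕ} (hp8 : p % 8 = 1) : jacobiSym 2 p = 1 := by
  rw [jacobiSym.at_two (Nat.odd_iff.2 (by omega)), ZMod.χ₈_nat_eq_if_mod_eight, if_neg (by omega),
    if_pos (by omega)]

variable {p : ℕ} {c d : ℤ}

lemma odd_of_eq_sq_sub (hp : Odd p) (hcd : (p : ℤ) = c ^ 2 - 32 * d ^ 2) : Odd c := by
  have hodd : Odd (c ^ 2) := by
    rw [sub_eq_iff_eq_add.1 hcd.symm]
    exact ((Int.odd_coe_nat p).2 hp).add_even ((by decide : Even (32 : ℤ)).mul_right _)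
  exact (Int.odd_pow' two_ne_zero).1 hodd

lemma isCoprime_of_eq_sq_sub (hp : p.Prime) (hcd : (p : ℤ) = c ^ 2 - 32 * d ^ 2) :
    IsCoprime c d :=
  isCoprime_of_squarefree_sq_sub_mul_sq (hcd ▸ (Nat.prime_iff_prime_int.1 hp).squarefree)

lemma jacobiSym_snd_eq_one (hp : p.Prime) (hp8 : p % 8 = 1) (hd : 0 < d)
    (hcd : (p : ℤ) = c ^ 2 - 32 * d ^ 2) : jacobiSym d p = 1 := by
  lift d to ℕ using hd.le
  obtain ⟨k, m, hm, rfl⟩ := Nat.exists_eq_two_pow_mul_odd (n := d) (by omega)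
  have hcm : IsCoprime c m := (isCoprime_of_eq_sq_sub hp hcd).of_isCoprime_of_dvd_right
    (by push_cast; exact dvd_mul_left _ _)
  have hmod : (p : ℤ) % m = c ^ 2 % m :=
    (Int.modEq_iff_dvd.2 ⟨32 * (2 ^ k) ^ 2 * m, by rw [hcd]; push_cast; ring⟩ :
      (p : ℤ) ≡ c ^ 2 [ZMOD m])
  push_cast
  rw [jacobiSym.mul_left, jacobiSym.pow_left, jacobiSym_two_eq_one hp8, one_pow, one_mul,
    jacobiSym_eq_jacobiSym_natAbs (by omega) (by exact_mod_cast hm), Int.natAbs_natCast,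
    jacobiSym.mod_left' hmod, jacobiSym.sq_one' (Int.isCoprime_iff_gcd_eq_one.1 hcm)]

lemma jacobiSym_fst_eq_χ₈' (hp : p.Prime) (hp8 : p % 8 = 1) (hc : 0 < c)
    (hcd : (p : ℤ) = c ^ 2 - 32 * d ^ 2) : jacobiSym c p = ZMod.χ₈' c := by
  have hcodd : Odd c := odd_of_eq_sq_sub (Nat.odd_iff.2 (by omega)) hcd
  have hcop : IsCoprime (2 ^ 2 * d) c :=
    (Int.isCoprime_two_left.2 hcodd).pow_left.mul_left (isCoprime_of_eq_sq_sub hp hcd).symm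
  lift c to ℕ using hc.le
  have hmod : (p : ℤ) % c = (-2 * (2 ^ 2 * d) ^ 2) % c :=
    (Int.modEq_iff_dvd.2 ⟨-c, by rw [hcd]; ring⟩ : (p : ℤ) ≡ -2 * (2 ^ 2 * d) ^ 2 [ZMOD c])
  rw [jacobiSym_eq_jacobiSym_natAbs (by omega) hcodd, Int.natAbs_natCast, jacobiSym.mod_left' hmod,
    jacobiSym.mul_left, jacobiSym.sq_one' (Int.isCoprime_iff_gcd_eq_one.1 hcop), mul_one,
    jacobiSym.at_neg_two ((Int.odd_coe_nat c).1 hcodd), Int.cast_natCast]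

/-- Raise `c² = 32 d²` to the power `(p - 1) / 4` in `𝔽_p`. -/
lemma two_pow_eq_χ₈' (hp : p.Prime) (hp8 : p % 8 = 1) (hc : 0 < c) (hd : 0 < d)
    (hcd : (p : ℤ) = c ^ 2 - 32 * d ^ 2) :
    (2 : ZMod p) ^ ((p - 1) / 4) = (ZMod.χ₈' c : ℤ) := by
  have := Fact.mk hp
  have heuler (a : ℤ) : ((jacobiSym a p : ℤ) : ZMod p) = ((a : ZMod p) ^ ((p - 1) / 4)) ^ 2 := by
    rw [← jacobiSym.legendreSym.to_jacobiSym, legendreSym.eq_pow, ← pow_mul]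
    congr 1
    omega
  have h2 := heuler 2
  have hd' := heuler d
  rw [jacobiSym_two_eq_one hp8] at h2
  rw [jacobiSym_snd_eq_one hp hp8 hd hcd] at hd'
  push_cast at h2 hd'
  have hsq : (c : ZMod p) ^ 2 = 2 ^ 2 * 2 ^ 2 * 2 * (d : ZMod p) ^ 2 := by
    have hcast := congrArg (Int.cast : ℤ → ZMod p) hcd
    push_cast at hcast
    rw [ZMod.natCast_self] at hcast
    linear_combination -hcast
  rw [← jacobiSym_fst_eq_χ₈' hp hp8 hc hcd, heuler c, pow_right_comm, hsq]
  simp only [mul_pow, pow_right_comm _ 2, ← h2, ← hd', one_mul, mul_one]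

lemma neg_one_pow_eq_χ₈ (hp8 : p % 8 = 1) (hcd : (p : ℤ) = c ^ 2 - 32 * d ^ 2) :
    (-1 : ℤ) ^ ((p - 1) / 8) = ZMod.χ₈ c := by
  have hc2 := Int.odd_iff.1 (odd_of_eq_sq_sub (Nat.odd_iff.2 (by omega)) hcd)
  have hmod : (p : ℤ) % 16 = (c % 8) ^ 2 % 16 := by
    have : (p : ℤ) = (c % 8) ^ 2 + 16 * (4 * (c / 8) ^ 2 + c / 8 * (c % 8) - 2 * d ^ 2) := by
      rw [hcd]
      linear_combination -(c + c % 8 + 8 * (c / 8)) * Int.emod_add_mul_ediv c 8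
    omega
  have heven : Even ((p - 1) / 8) ↔ c % 8 = 1 ∨ c % 8 = 7 := by
    rw [Nat.even_iff]
    obtain h | h | h | h : c % 8 = 1 ∨ c % 8 = 3 ∨ c % 8 = 5 ∨ c % 8 = 7 := by omega
    all_goals
      rw [h] at hmod ⊢
      omega
  rw [ZMod.χ₈_int_eq_if_mod_eight, if_neg (by omega)]
  split_ifs with h
  · exact (heven.2 h).neg_one_pow
  · exact (Nat.not_even_iff_odd.1 (heven.not.2 h)).neg_one_pow

lemma mod_four_eq_one_of_two_pow_eq (hp : p.Prime) (hp8 : p % 8 = 1) (hc : 0 < c) (hd : 0 < d)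
    (hcd : (p : ℤ) = c ^ 2 - 32 * d ^ 2)
    (h : (2 : ZMod p) ^ ((p - 1) / 4) = (-1) ^ ((p - 1) / 8)) : c % 4 = 1 := by
  have : Fact (2 < p) := ⟨by have := hp.two_le; omega⟩
  have hne := ZMod.neg_one_ne_one (n := p)
  have hc2 := Int.odd_iff.1 (odd_of_eq_sq_sub (Nat.odd_iff.2 (by omega)) hcd)
  have hχ : ((ZMod.χ₈' c : ℤ) : ZMod p) = (ZMod.χ₈ c : ℤ) := by
    rw [← two_pow_eq_χ₈' hp hp8 hc hd hcd, ← neg_one_pow_eq_χ₈ hp8 hcd, h]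
    push_cast
    rfl
  rw [ZMod.χ₈_int_eq_if_mod_eight, ZMod.χ₈'_int_eq_if_mod_eight] at hχ
  push_cast at hχ
  split_ifs at hχ
  all_goals first | omega | exact absurd hχ hne | exact absurd hχ.symm hne

lemma mod_four_eq_three_of_two_pow_eq_neg (hp : p.Prime) (hp8 : p % 8 = 1) (hc : 0 < c)
    (hd : 0 < d) (hcd : (p : ℤ) = c ^ 2 - 32 * d ^ 2)
    (h : (2 : ZMod p) ^ ((p - 1) / 4) = -(-1) ^ ((p - 1) / 8)) : c % 4 = 3 := by
  have : Fact (2 < p) := ⟨by have := hp.two_le; omega⟩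
  have hne := ZMod.neg_one_ne_one (n := p)
  have hc2 := Int.odd_iff.1 (odd_of_eq_sq_sub (Nat.odd_iff.2 (by omega)) hcd)
  have hχ : ((ZMod.χ₈' c : ℤ) : ZMod p) = -(ZMod.χ₈ c : ℤ) := by
    rw [← two_pow_eq_χ₈' hp hp8 hc hd hcd, ← neg_one_pow_eq_χ₈ hp8 hcd, h]
    push_cast
    rfl
  rw [ZMod.χ₈_int_eq_if_mod_eight, ZMod.χ₈'_int_eq_if_mod_eight] at hχ
  push_cast at hχ
  split_ifs at hχ
  all_goals first
    | omega | exact absurd hχ.symm hne | exact absurd (hχ.trans (neg_neg 1)) hne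

lemma exists_residue_hom (hp : p.Prime) {π : ℤ√2} (hN : π.norm = p) :
    ∃ φ : ℤ√2 →+* ZMod p, ∀ a, φ a = 0 ↔ π ∣ a := by
  have := Fact.mk hp
  have hπ : Prime π := prime_of_prime_natAbs_norm (by rwa [hN, Int.natAbs_natCast])
  have hnorm : (π.re : ZMod p) ^ 2 - 2 * (π.im : ZMod p) ^ 2 = 0 := by
    have hcast := congrArg (Int.cast : ℤ → ZMod p) hN
    rw [Zsqrtd.norm_def, Int.cast_natCast, ZMod.natCast_self] at hcast
    push_cast at hcast
    linear_combination hcast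
  have him : (π.im : ZMod p) ≠ 0 := by
    intro him
    have hre : (π.re : ZMod p) = 0 := by
      rwa [him, zero_pow two_ne_zero, mul_zero, sub_zero, sq_eq_zero_iff] at hnorm
    rw [ZMod.intCast_zmod_eq_zero_iff_dvd] at hre him
    obtain ⟨b, hb⟩ := (Zsqrtd.intCast_dvd _ _).2 ⟨hre, him⟩
    have hN' := congrArg Zsqrtd.norm hb
    rw [Zsqrtd.norm_mul, Zsqrtd.norm_intCast, hN, mul_assoc] at hN'
    have hpp := Nat.prime_iff_prime_int.1 hp
    exact hpp.not_isUnit (.of_mul_eq_one _ (mul_left_cancel₀ hpp.ne_zero (by rw [← hN', mul_one])))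
  let φ : ℤ√2 →+* ZMod p := Zsqrtd.lift ⟨-π.re / π.im, by
    field_simp
    push_cast
    linear_combination hnorm⟩
  have hφπ : φ π = 0 := by
    rw [Zsqrtd.lift_apply_apply, mul_div_cancel₀ _ him, add_neg_cancel]
  have hmax : (Ideal.span {π}).IsMaximal :=
    PrincipalIdealRing.isMaximal_of_irreducible hπ.irreducible
  have hker : Ideal.span {π} = RingHom.ker φ :=
    hmax.eq_of_le (RingHom.ker_ne_top φ)
      ((Ideal.span_singleton_le_iff_mem _).2 (RingHom.mem_ker.2 hφπ))
  exact ⟨φ, fun a => by rw [← Ideal.mem_span_singleton, hker, RingHom.mem_ker]⟩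

lemma jacobiSym_mul_sub_eq_χ₈ (hp : p.Prime) (hp8 : p % 8 = 1) (hd : 0 < d)
    (hcd : (p : ℤ) = c ^ 2 - 32 * d ^ 2) : jacobiSym (d * (8 * d - c)) p = ZMod.χ₈ c := by
  have hc : Odd c := odd_of_eq_sq_sub (Nat.odd_iff.2 (by omega)) hcd
  have hm : Odd (8 * d - c) := ((by decide : Even (8 : ℤ)).mul_right d).sub_odd hc
  have hdm : IsCoprime (2 ^ 2 * d) (8 * d - c) := by
    refine (Int.isCoprime_two_left.2 hm).pow_left.mul_left ?_
    rw [sub_eq_neg_add]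
    exact (isCoprime_of_eq_sq_sub hp hcd).symm.neg_right.add_mul_right_right 8
  have hmod : (p : ℤ) % (8 * d - c).natAbs = (2 * (2 ^ 2 * d) ^ 2) % (8 * d - c).natAbs := by
    rw [Int.natCast_natAbs, Int.emod_abs, Int.emod_abs]
    exact (Int.modEq_iff_dvd.2 ⟨c + 8 * d, by rw [hcd]; ring⟩ :
      (p : ℤ) ≡ 2 * (2 ^ 2 * d) ^ 2 [ZMOD 8 * d - c])
  have hgcd : (2 ^ 2 * d).gcd (8 * d - c).natAbs = 1 := by
    rw [← Int.isCoprime_iff_gcd_eq_one, Int.natCast_natAbs]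
    exact hdm.abs_right
  rw [jacobiSym.mul_left, jacobiSym_snd_eq_one hp hp8 hd hcd, one_mul,
    jacobiSym_eq_jacobiSym_natAbs (by omega) hm, jacobiSym.mod_left' hmod, jacobiSym.mul_left,
    jacobiSym.sq_one' hgcd, mul_one, jacobiSym.at_two hm.natAbs, ZMod.χ₈_nat_eq_if_mod_eight,
    ZMod.χ₈_int_eq_if_mod_eight]
  grind

/-- Modulo `π = c + 4d√2` one has `√2 = -c / 4d`, hence `2 + √2 = d (8d - c) / (2d)²`. -/
lemma isSquare_two_add_sqrtd_iff (hp : p.Prime) (hp8 : p % 8 = 1) (hd : 0 < d)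
    (hcd : (p : ℤ) = c ^ 2 - 32 * d ^ 2) {φ : ℤ√2 →+* ZMod p} (hφ : φ ⟨c, 4 * d⟩ = 0) :
    IsSquare (φ ⟨2, 1⟩) ↔ (-1 : ℤ) ^ ((p - 1) / 8) = 1 := by
  rw [neg_one_pow_eq_χ₈ hp8 hcd]
  have := Fact.mk hp
  have hJ := jacobiSym_mul_sub_eq_χ₈ hp hp8 hd hcd
  have h2d : ((2 * d : ℤ) : ZMod p) ≠ 0 := by
    have hne : jacobiSym (2 * d) p ≠ 0 := by
      rw [jacobiSym.mul_left, jacobiSym_two_eq_one hp8, jacobiSym_snd_eq_one hp hp8 hd hcd]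
      norm_num
    rwa [← jacobiSym.legendreSym.to_jacobiSym, Ne, legendreSym.eq_zero_iff] at hne
  have hrel : ((d * (8 * d - c) : ℤ) : ZMod p) = φ ⟨2, 1⟩ * ((2 * d : ℤ) : ZMod p) ^ 2 := by
    have hsplit (a b : ℤ) : φ ⟨a, b⟩ = a + b * φ Zsqrtd.sqrtd := by
      rw [Zsqrtd.decompose, map_add, map_mul, map_intCast, map_intCast, mul_comm]
    rw [hsplit] at hφ ⊢
    push_cast at hφ ⊢
    linear_combination -(d : ZMod p) * hφ
  have hiff : IsSquare (φ ⟨2, 1⟩) ↔ IsSquare ((d * (8 * d - c) : ℤ) : ZMod p) := by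
    rw [hrel]
    refine ⟨fun h => h.mul (IsSquare.sq _), fun h => ?_⟩
    rw [← mul_div_cancel_right₀ (φ ⟨2, 1⟩) (pow_ne_zero 2 h2d)]
    exact h.div (IsSquare.sq _)
  have hχ : ZMod.χ₈ c ≠ 0 := by
    have hc := Int.odd_iff.1 (odd_of_eq_sq_sub (Nat.odd_iff.2 (by omega)) hcd)
    rw [ZMod.χ₈_int_eq_if_mod_eight]
    split_ifs <;> omega
  rw [← hJ, ← jacobiSym.legendreSym.to_jacobiSym, Ne, legendreSym.eq_zero_iff] at hχ
  rw [hiff, ← hJ, ← jacobiSym.legendreSym.to_jacobiSym, legendreSym.eq_one_iff p hχ]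

end Residues

/-! ### The class of the ideal above `√2` -/

lemma eq_zero_of_mul_sq_eq_sq_add_mul_sq {R F : Type*} [CommRing R] [IsDomain R] [WfDvdMonoid R]
    [Field F] {π : R} (hπ : Prime π) {φ : R →+* F} (hφ : ∀ a, φ a = 0 ↔ π ∣ a) {α : R}
    (hα : ¬IsSquare (φ α)) {a b e : R} (h : α * e ^ 2 = a ^ 2 + π * b ^ 2) : e = 0 := by
  induction e using (wellFounded_dvdNotUnit (α := R)).induction generalizing a b with
  | _ e ih =>
    by_contra he
    have hφh : φ α * φ e ^ 2 = φ a ^ 2 := by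
      have hmap := congrArg φ h
      rwa [map_mul, map_pow, map_add, map_pow, map_mul, (hφ π).2 dvd_rfl, zero_mul,
        add_zero] at hmap
    by_cases hφe : φ e = 0
    · rw [hφe, zero_pow two_ne_zero, mul_zero, eq_comm, pow_eq_zero_iff two_ne_zero] at hφh
      obtain ⟨e, rfl⟩ := (hφ e).1 hφe
      obtain ⟨a, rfl⟩ := (hφ a).1 hφh
      have hb : b ^ 2 = π * (α * e ^ 2 - a ^ 2) := by
        apply mul_left_cancel₀ hπ.ne_zero
        linear_combination -h
      obtain ⟨b, rfl⟩ := hπ.dvd_of_dvd_pow ⟨_, hb⟩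
      have he0 := right_ne_zero_of_mul he
      refine he0 (ih e ⟨he0, π, hπ.not_isUnit, mul_comm π e⟩ (a := a) (b := b) ?_)
      apply mul_left_cancel₀ (pow_ne_zero 2 hπ.ne_zero)
      linear_combination h
    · refine hα ⟨φ a / φ e, ?_⟩
      rw [div_mul_div_comm, ← sq, ← sq, ← hφh, mul_div_cancel_right₀ _ (pow_ne_zero 2 hφe)]

lemma IsConjugation.map_eq_of_sq_eq_span_algebraMap {R O : Type*} [CommRing R] [CommRing O]
    [IsDedekindDomain O] [Algebra R O] {σ : O ≃ₐ[R] O} {J : Ideal O} {a : R}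
    (hJ : J ^ 2 = Ideal.span {algebraMap R O a}) : J.map σ = J := by
  apply uniqueFactorizationMonoid_pow_injective two_ne_zero
  rw [← Ideal.map_pow, hJ, map_span_singleton, σ.commutes]

namespace IsSqrtNeg

variable {O : Type*} [CommRing O] [IsDedekindDomain O] [Algebra (ℤ√2) O] [FaithfulSMul (ℤ√2) O]
  {σ : O ≃ₐ[ℤ√2] O} {π : ℤ√2} {Z : O}

/-- If `J ~ A²` then `J A'² = (x)` with `A' = σ A`; take relative norms. -/
lemma exists_norm_eq_two_add_sqrtd_mul_sq (h : IsSqrtNeg σ π Z) (hπ : Prime π)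
    (hpos : TotPos π) {J : Ideal O} (hJ : J ≠ ⊥)
    (hJr : J ^ 2 = Ideal.span {algebraMap (ℤ√2) O Zsqrtd.sqrtd}) {g : ClassGroup O}
    (hg : idealClass J hJ = g ^ 2) :
    ∃ (x : O) (m : ℤ√2), m ≠ 0 ∧ algebraMap (ℤ√2) O (⟨2, 1⟩ * m ^ 2) = x * σ x := by
  obtain ⟨A, hA, rfl⟩ := idealClass_surjective g
  have hA' : A.map σ ≠ ⊥ := IsConjugation.map_ne_bot hA
  obtain ⟨m, hm, hAm⟩ := h.exists_mul_map_eq_span hA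
  have hAA' : A.map σ * A.map σ ≠ ⊥ := mul_ne_zero hA' hA'
  obtain ⟨x, hx⟩ : ∃ x, J * (A.map σ * A.map σ) = Ideal.span {x} := by
    rw [← idealClass_eq_one_iff (mul_ne_zero hJ hAA'), idealClass_mul hJ hAA',
      idealClass_mul hA' hA', ← sq, hg, ← mul_pow, h.idealClass_mul_idealClass_map hA, one_pow]
  obtain ⟨n, hn⟩ := h.exists_norm x
  have hx0 : x ≠ 0 := by
    rintro rfl
    exact mul_ne_zero hJ hAA' (hx.trans Ideal.span_singleton_zero)
  obtain ⟨u, hu⟩ : Associated (Zsqrtd.sqrtd * m ^ 2) n := by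
    apply h.associated_of_span_algebraMap_eq
    rw [hn, map_mul, map_pow, ← Ideal.span_singleton_mul_span_singleton,
      ← Ideal.span_singleton_mul_span_singleton, ← IsConjugation.map_span_singleton, ← hx,
      ← Ideal.span_singleton_pow, ← hAm, ← hJr, Ideal.map_mul, Ideal.map_mul, h.map_map,
      IsConjugation.map_eq_of_sq_eq_span_algebraMap hJr]
    ring
  have hpos' : TotPos (Zsqrtd.sqrtd * (u : ℤ√2)) := by
    apply TotPos.of_mul_right (b := m ^ 2) _ (totPos_sq hm)
    rw [mul_right_comm, hu]
    exact h.norm_totPos hπ hpos hx0 hn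
  obtain ⟨w, hw, huw⟩ := hpos'.exists_isUnit_eq_two_add_sqrtd_mul_sq ⟨u, rfl⟩
  refine ⟨x, w * m, mul_ne_zero hw.ne_zero hm, ?_⟩
  rw [← hn, ← hu, mul_right_comm, huw, mul_pow, mul_assoc]

lemma idealClass_ne_sq (h : IsSqrtNeg σ π Z) (hπ : Prime π) (hpos : TotPos π) {F : Type*}
    [Field F] {φ : ℤ√2 →+* F} (hφ : ∀ a, φ a = 0 ↔ π ∣ a) (hsq : ¬IsSquare (φ ⟨2, 1⟩))
    {J : Ideal O} (hJ : J ≠ ⊥) (hJr : J ^ 2 = Ideal.span {algebraMap (ℤ√2) O Zsqrtd.sqrtd})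
    (g : ClassGroup O) : idealClass J hJ ≠ g ^ 2 := by
  intro hg
  obtain ⟨x, m, hm, hx⟩ := h.exists_norm_eq_two_add_sqrtd_mul_sq hπ hpos hJ hJr hg
  obtain ⟨t, s, n, -, -, hn, h4⟩ := h.exists_coords hπ x
  obtain rfl := FaithfulSMul.algebraMap_injective (ℤ√2) O (hx.trans hn.symm)
  refine mul_ne_zero two_ne_zero hm
    (eq_zero_of_mul_sq_eq_sq_add_mul_sq hπ hφ hsq (a := t) (b := s) ?_)
  rw [← h4]
  ring

end IsSqrtNeg

/-! ### Minkowski's theorem for products of linear forms -/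

section Minkowski

open scoped Matrix

variable {ι : Type*} [Fintype ι]

lemma prod_le_sum_div_card_pow [Nonempty ι] {x : ι → ℝ} (hx : ∀ i, 0 ≤ x i) :
    ∏ i, x i ≤ ((∑ i, x i) / Fintype.card ι) ^ Fintype.card ι := by
  have hcard : (0 : ℝ) < Fintype.card ι := Nat.cast_pos.2 Fintype.card_pos
  have h := Real.geom_mean_le_arith_mean Finset.univ (fun _ => (1 : ℝ)) x
    (fun _ _ => zero_le_one) (by simpa using hcard) fun i _ => hx i
  simp only [Real.rpow_one, one_mul, Finset.sum_const, Finset.card_univ, nsmul_eq_mul,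
    mul_one] at h
  rwa [Real.rpow_inv_le_iff_of_pos (Finset.prod_nonneg fun i _ => hx i)
    (div_nonneg (Finset.sum_nonneg fun i _ => hx i) hcard.le) hcard, Real.rpow_natCast] at h

lemma isCompact_setOf_sum_abs_le (B : ℝ) : IsCompact {x : ι → ℝ | ∑ i, |x i| ≤ B} := by
  rw [Metric.isCompact_iff_isClosed_bounded]
  refine ⟨isClosed_le (by fun_prop) continuous_const, (Metric.isBounded_closedBall (x := 0)
    (r := B)).subset fun x hx => ?_⟩
  have hB : 0 ≤ B := (Finset.sum_nonneg fun i _ => abs_nonneg (x i)).trans hx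
  rw [mem_closedBall_zero_iff, pi_norm_le_iff_of_nonneg hB]
  exact fun i => (Finset.single_le_sum (fun j _ => abs_nonneg (x j)) (Finset.mem_univ i)).trans hx

lemma volume_setOf_sum_abs_le [Nonempty ι] {B : ℝ} (hB : 0 ≤ B) :
    MeasureTheory.volume {x : ι → ℝ | ∑ i, |x i| ≤ B} =
      ENNReal.ofReal ((2 * B) ^ Fintype.card ι / (Fintype.card ι).factorial) := by
  have h := MeasureTheory.volume_sum_rpow_le ι le_rfl B
  simp only [Real.rpow_one, div_one, one_add_one_eq_two, Real.Gamma_two, mul_one,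
    Real.Gamma_nat_eq_factorial] at h
  rw [h, ← ENNReal.ofReal_pow hB, ← ENNReal.ofReal_mul (pow_nonneg hB _), mul_pow, mul_div_assoc',
    mul_comm]

lemma convex_setOf_sum_abs_le (B : ℝ) : Convex ℝ {x : ι → ℝ | ∑ i, |x i| ≤ B} := by
  intro x hx y hy a b ha hb hab
  calc ∑ i, |a * x i + b * y i| ≤ ∑ i, (a * |x i| + b * |y i|) := by
        refine Finset.sum_le_sum fun i _ => (abs_add_le _ _).trans_eq ?_
        rw [abs_mul, abs_mul, abs_of_nonneg ha, abs_of_nonneg hb]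
    _ = a * ∑ i, |x i| + b * ∑ i, |y i| := by
        rw [Finset.sum_add_distrib, Finset.mul_sum, Finset.mul_sum]
    _ ≤ a * B + b * B := by gcongr <;> assumption
    _ = B := by rw [← add_mul, hab, one_mul]

variable [DecidableEq ι]

/-- Minkowski's theorem for the lattice spanned by the rows of `A` and a cross-polytope. -/
lemma exists_ne_zero_sum_abs_vecMul_pow_le [Nonempty ι] {A : Matrix ι ι ℝ} (hA : A.det ≠ 0) :
    ∃ n : ι → ℤ, n ≠ 0 ∧ (∑ j, |((fun i => (n i : ℝ)) ᵥ* A) j|) ^ Fintype.card ι ≤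
      (Fintype.card ι).factorial * |A.det| := by
  have hcard : Fintype.card ι ≠ 0 := Fintype.card_ne_zero
  obtain ⟨B, hB, hBA⟩ : ∃ B : ℝ, 0 ≤ B ∧
      B ^ Fintype.card ι = (Fintype.card ι).factorial * |A.det| :=
    ⟨((Fintype.card ι).factorial * |A.det|) ^ (Fintype.card ι : ℝ)⁻¹, by positivity,
      Real.rpow_inv_natCast_pow (by positivity) hcard⟩
  let b : Module.Basis ι ℝ (ι → ℝ) := basisOfLinearIndependentOfCardEqFinrank
    (Matrix.linearIndependent_rows_of_det_ne_zero hA) (by simp)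
  have hb : ⇑b = A.row := coe_basisOfLinearIndependentOfCardEqFinrank _ _
  have hvol : MeasureTheory.volume (ZSpan.fundamentalDomain b) = ENNReal.ofReal |A.det| := by
    rw [ZSpan.volume_fundamentalDomain, hb]
    rfl
  have : Countable (Submodule.span ℤ (Set.range b)).toAddSubgroup :=
    inferInstanceAs (Countable (Submodule.span ℤ (Set.range b)))
  have : DiscreteTopology (Submodule.span ℤ (Set.range b)).toAddSubgroup :=
    inferInstanceAs (DiscreteTopology (Submodule.span ℤ (Set.range b)))
  obtain ⟨⟨x, hxmem⟩, hx0, hx⟩ :=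
    MeasureTheory.exists_ne_zero_mem_lattice_of_measure_mul_two_pow_le_measure
      (ZSpan.isAddFundamentalDomain' b MeasureTheory.volume)
      (s := {x : ι → ℝ | ∑ i, |x i| ≤ B})
      (fun x hx => by simpa only [Set.mem_ofPred_eq, Pi.neg_apply, abs_neg] using hx)
      (convex_setOf_sum_abs_le B) (isCompact_setOf_sum_abs_le B) (by
        rw [hvol, volume_setOf_sum_abs_le hB, mul_pow, hBA, Module.finrank_fintype_fun_eq_card,
          ← ENNReal.ofReal_ofNat 2, ← ENNReal.ofReal_pow zero_le_two,
          ← ENNReal.ofReal_mul (abs_nonneg _)]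
        refine ENNReal.ofReal_le_ofReal (le_of_eq ?_)
        field_simp)
  obtain ⟨n, rfl⟩ := (Submodule.mem_span_range_iff_exists_fun ℤ).1 hxmem
  have hnA : (fun i => (n i : ℝ)) ᵥ* A = ∑ i, n i • b i := by
    ext j
    simp [Matrix.vecMul, dotProduct, hb]
  refine ⟨n, ?_, ?_⟩
  · rintro rfl
    exact hx0 (by simp)
  · rw [hnA, ← hBA]
    exact pow_le_pow_left₀ (Finset.sum_nonneg fun _ _ => abs_nonneg _) hx _

lemma exists_ne_zero_prod_abs_vecMul_le [Nonempty ι] {A : Matrix ι ι ℝ} (hA : A.det ≠ 0) :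
    ∃ n : ι → ℤ, n ≠ 0 ∧ ∏ j, |((fun i => (n i : ℝ)) ᵥ* A) j| ≤
      (Fintype.card ι).factorial / (Fintype.card ι : ℝ) ^ Fintype.card ι * |A.det| := by
  obtain ⟨n, hn, hsum⟩ := exists_ne_zero_sum_abs_vecMul_pow_le hA
  refine ⟨n, hn, (prod_le_sum_div_card_pow fun _ => abs_nonneg _).trans ?_⟩
  rw [div_pow, div_mul_eq_mul_div]
  gcongr

end Minkowski

/-! ### Norms from `ℚ(√(2 + √2))` -/

/-- The images of `v + u√a`, for `v, u ∈ ℤ[√2]`, under the four embeddings of `ℚ(√a)` in `ℝ`, where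
`ℓ` and `ℓ'` are square roots of the two conjugates of `a`. -/
def formCoords (ℓ ℓ' : ℝ) : ℤ√2 × ℤ√2 →+ (Fin 4 → ℝ) where
  toFun w := ![realPlace w.1 + ℓ * realPlace w.2, realPlace w.1 - ℓ * realPlace w.2,
    realPlace' w.1 + ℓ' * realPlace' w.2, realPlace' w.1 - ℓ' * realPlace' w.2]
  map_zero' := by simp
  map_add' w₁ w₂ := by
    ext j
    fin_cases j <;> simp <;> ring

lemma prod_formCoords {a : ℤ√2} {ℓ ℓ' : ℝ} (hℓ : ℓ ^ 2 = realPlace a) (hℓ' : ℓ' ^ 2 = realPlace' a)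
    (w : ℤ√2 × ℤ√2) : ∏ j, formCoords ℓ ℓ' w j = ((w.1 ^ 2 - a * w.2 ^ 2).norm : ℝ) := by
  simp only [norm_eq_realPlace_mul_realPlace', map_sub, map_mul, map_pow, ← hℓ, ← hℓ',
    Fin.prod_univ_four, formCoords, AddMonoidHom.coe_mk, ZeroHom.coe_mk, Matrix.cons_val]
  ring

/-- A basis of the lattice of the `(v, u)` with `v ≡ ru` modulo `p` and `√2 - s`. -/
def congruenceBasis (p : ℕ) (s r : ℤ) : Fin 4 → ℤ√2 × ℤ√2 :=
  ![((Zsqrtd.sqrtd : ℤ√2) - s, 0), (p, 0), (r, 1), ((r : ℤ√2) * Zsqrtd.sqrtd, Zsqrtd.sqrtd)]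

lemma map_fst_congruenceBasis {p : ℕ} {s r : ℤ} {φ : ℤ√2 →+* ZMod p} (hs : s = φ Zsqrtd.sqrtd)
    (i : Fin 4) : φ (congruenceBasis p s r i).1 = r * φ (congruenceBasis p s r i).2 := by
  fin_cases i <;> simp [congruenceBasis, hs]

lemma det_formCoords_congruenceBasis (ℓ ℓ' : ℝ) (p : ℕ) (s r : ℤ) :
    (Matrix.of fun i => formCoords ℓ ℓ' (congruenceBasis p s r i)).det = 32 * p * (ℓ * ℓ') := by
  have h2 : √(2 : ℝ) ^ 2 = 2 := Real.sq_sqrt zero_le_two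
  simp [Matrix.det_succ_row_zero, Fin.sum_univ_succ, Fin.succAbove, formCoords, congruenceBasis,
    realPlace_apply, realPlace'_apply]
  linear_combination (16 * p * ℓ * ℓ' : ℝ) * h2

lemma exists_prod_abs_formCoords_le {ℓ ℓ' : ℝ} (hℓ : 0 < ℓ) (hℓ' : 0 < ℓ') {p : ℕ} (hp : p ≠ 0)
    (φ : ℤ√2 →+* ZMod p) (r : ZMod p) :
    ∃ w : ℤ√2 × ℤ√2, w ≠ 0 ∧ φ w.1 = r * φ w.2 ∧
      ∏ j, |formCoords ℓ ℓ' w j| ≤ 3 * p * (ℓ * ℓ') := by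
  obtain ⟨r, rfl⟩ := ZMod.intCast_surjective r
  obtain ⟨s, hs⟩ := ZMod.intCast_surjective (φ Zsqrtd.sqrtd)
  have hdet := det_formCoords_congruenceBasis ℓ ℓ' p s r
  set A := Matrix.of fun i => formCoords ℓ ℓ' (congruenceBasis p s r i)
  have hdet0 : 0 < A.det := by
    rw [hdet]
    positivity
  obtain ⟨n, hn, hprod⟩ := exists_ne_zero_prod_abs_vecMul_le hdet0.ne'
  have hnA : Matrix.vecMul (fun i => (n i : ℝ)) A =
      formCoords ℓ ℓ' (∑ i, n i • congruenceBasis p s r i) := by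
    rw [Matrix.vecMul_eq_sum, map_sum]
    refine Finset.sum_congr rfl fun i _ => ?_
    rw [map_zsmul, ← Int.cast_smul_eq_zsmul ℝ]
    rfl
  refine ⟨∑ i, n i • congruenceBasis p s r i, fun h0 => hn ?_, ?_, ?_⟩
  · rw [h0, map_zero] at hnA
    ext i
    exact Int.cast_eq_zero.1 (congrFun (Matrix.eq_zero_of_vecMul_eq_zero hdet0.ne' hnA) i)
  · simp only [Prod.fst_sum, Prod.snd_sum, Prod.smul_fst, Prod.smul_snd, map_sum, map_zsmul,
      map_fst_congruenceBasis hs, Finset.mul_sum, mul_smul_comm]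
  · rw [hnA, abs_of_pos hdet0, hdet, Fintype.card_fin] at hprod
    refine hprod.trans_eq ?_
    norm_num [Nat.factorial]
    ring

lemma exists_norm_sq_le_of_isSquare {p : ℕ} (hp : p ≠ 0) (φ : ℤ√2 →+* ZMod p) {a : ℤ√2}
    (ha : TotPos a) (hsq : IsSquare (φ a)) :
    ∃ v u : ℤ√2, (v, u) ≠ 0 ∧ φ (v ^ 2 - a * u ^ 2) = 0 ∧
      (v ^ 2 - a * u ^ 2).norm ^ 2 ≤ 9 * (p : ℤ) ^ 2 * a.norm := by
  obtain ⟨r, hr⟩ := hsq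
  obtain ⟨⟨v, u⟩, hw, hvu, hprod⟩ := exists_prod_abs_formCoords_le (Real.sqrt_pos.2 ha.1)
    (Real.sqrt_pos.2 ha.2) hp φ r
  have hℓ := Real.sq_sqrt ha.1.le
  have hℓ' := Real.sq_sqrt ha.2.le
  refine ⟨v, u, hw, ?_, ?_⟩
  · rw [map_sub, map_mul, map_pow, map_pow, hr, hvu]
    ring
  · rw [← Finset.abs_prod, prod_formCoords hℓ hℓ'] at hprod
    have hsq := pow_le_pow_left₀ (abs_nonneg _) hprod 2
    rw [sq_abs, mul_pow, mul_pow, mul_pow, hℓ, hℓ', ← norm_eq_realPlace_mul_realPlace'] at hsq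
    norm_num at hsq
    exact_mod_cast hsq

/-- `a` is, up to a nonzero square, a norm from `ℚ(√(2 + √2))` to `ℚ(√2)`. -/
def IsForm (a : ℤ√2) : Prop :=
  ∃ e v u : ℤ√2, e ≠ 0 ∧ a * e ^ 2 = v ^ 2 - ⟨2, 1⟩ * u ^ 2

namespace IsForm

lemma mul {a b : ℤ√2} (ha : IsForm a) (hb : IsForm b) : IsForm (a * b) := by
  obtain ⟨e, v, u, he, h⟩ := ha
  obtain ⟨e', v', u', he', h'⟩ := hb
  refine ⟨e * e', v * v' + ⟨2, 1⟩ * u * u', v * u' + u * v', mul_ne_zero he he', ?_⟩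
  linear_combination b * e' ^ 2 * h + (v ^ 2 - ⟨2, 1⟩ * u ^ 2) * h'

lemma of_mul_sq {a b : ℤ√2} (hb : b ≠ 0) (h : IsForm (a * b ^ 2)) : IsForm a := by
  obtain ⟨e, v, u, he, h⟩ := h
  exact ⟨b * e, v, u, mul_ne_zero hb he, by linear_combination h⟩

end IsForm

lemma isForm_sq (a : ℤ√2) : IsForm (a ^ 2) :=
  ⟨1, a, 0, one_ne_zero, by ring⟩

lemma isForm_sqrtd_sub_one : IsForm ⟨-1, 1⟩ := ⟨1, 1, ⟨-1, 1⟩, one_ne_zero, rfl⟩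

lemma isForm_neg_one_sub_sqrtd : IsForm ⟨-1, -1⟩ := ⟨1, 1, 1, one_ne_zero, rfl⟩

lemma isForm_neg_one : IsForm (-1) := isForm_neg_one_sub_sqrtd.mul isForm_sqrtd_sub_one

lemma isForm_sqrtd : IsForm Zsqrtd.sqrtd :=
  have h : IsForm ⟨-2, -1⟩ := ⟨1, 0, 1, one_ne_zero, rfl⟩
  (h.mul isForm_neg_one).mul isForm_sqrtd_sub_one

lemma isForm_of_isUnit {u : ℤ√2} (hu : IsUnit u) : IsForm u := by
  have key {v : ℤ√2} (hv : v.norm = 1) : IsForm v := by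
    obtain ⟨w, -, rfl | rfl⟩ := exists_isUnit_eq_sq_or_eq_neg_sq_of_norm_eq_one hv
    · exact isForm_sq w
    · exact neg_one_mul (w ^ 2) ▸ isForm_neg_one.mul (isForm_sq w)
  rcases zsqrtTwo_isUnit_iff.1 hu with h | h
  · exact key h
  · have hform : IsForm (u * ⟨1, 1⟩) := key (by rw [Zsqrtd.norm_mul, h]; rfl)
    have hmul : u * ⟨1, 1⟩ * ⟨-1, 1⟩ = u := (mul_assoc u ⟨1, 1⟩ ⟨-1, 1⟩).trans (mul_one u)
    exact hmul ▸ hform.mul isForm_sqrtd_sub_one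

lemma isForm_of_natAbs_norm_eq_two_pow {a : ℤ√2} {k : ℕ} (ha : a.norm.natAbs = 2 ^ k) :
    IsForm a := by
  induction k generalizing a with
  | zero => exact isForm_of_isUnit (Zsqrtd.norm_eq_one_iff.1 ha)
  | succ k ih =>
    obtain ⟨b, rfl⟩ : Zsqrtd.sqrtd ∣ a := by
      have h2 : 2 ∣ a.norm := by omega
      rw [Zsqrtd.norm_def, mul_assoc, dvd_sub_left (dvd_mul_right _ _), ← sq] at h2
      exact sqrtd_two_dvd_iff.2 (Int.prime_two.dvd_of_dvd_pow h2)
    refine isForm_sqrtd.mul (ih ?_)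
    have h2 : (Zsqrtd.sqrtd : ℤ√2).norm.natAbs = 2 := rfl
    rw [Zsqrtd.norm_mul, Int.natAbs_mul, h2, pow_succ'] at ha
    exact Nat.eq_of_mul_eq_mul_left two_pos ha

lemma isForm_of_abs_norm_le_four {a : ℤ√2} (ha : a ≠ 0) (h : |a.norm| ≤ 4) : IsForm a := by
  have h0 : a.norm ≠ 0 := mt zsqrtTwo_norm_eq_zero.1 ha
  have h3 : a.norm.natAbs ≠ 3 := by
    have hmod : ∀ x y : ZMod 8, x * x - 2 * y * y ≠ 3 ∧ x * x - 2 * y * y ≠ -3 := by decide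
    have hcast : ((a.norm : ℤ) : ZMod 8) = a.re * a.re - 2 * a.im * a.im := by
      rw [Zsqrtd.norm_def]
      push_cast
      rfl
    intro h
    rcases Int.natAbs_eq_iff.1 h with h | h <;> rw [h] at hcast
    · exact (hmod _ _).1 hcast.symm
    · exact (hmod _ _).2 hcast.symm
  rw [Int.abs_eq_natAbs] at h
  obtain h | h | h : a.norm.natAbs = 2 ^ 0 ∨ a.norm.natAbs = 2 ^ 1 ∨ a.norm.natAbs = 2 ^ 2 := by
    omega
  all_goals exact isForm_of_natAbs_norm_eq_two_pow h

lemma sq_ne_two_add_sqrtd_mul_sq {v u : ℤ√2} (h : (v, u) ≠ 0) : v ^ 2 ≠ ⟨2, 1⟩ * u ^ 2 := by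
  intro hvu
  have hnorm : v.norm ^ 2 = 2 * u.norm ^ 2 := by
    have h2 : (⟨2, 1⟩ : ℤ√2).norm = 2 := rfl
    rw [sq, sq, ← Zsqrtd.norm_mul, ← Zsqrtd.norm_mul, ← sq, ← sq, hvu, Zsqrtd.norm_mul, h2]
  obtain ⟨k, hk⟩ := (Int.pow_dvd_pow_iff two_ne_zero).1 (Dvd.intro_left 2 hnorm.symm)
  have hu : u.norm = 0 := by
    by_contra hu
    rw [hk, mul_pow, mul_comm] at hnorm
    have hk2 : k ^ 2 = 2 := mul_right_cancel₀ (pow_ne_zero 2 hu) hnorm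
    exact Int.prime_two.irreducible.not_isSquare ⟨k, by rw [← sq, hk2]⟩
  rw [hu, zero_mul] at hk
  exact h (Prod.ext (zsqrtTwo_norm_eq_zero.1 hk) (zsqrtTwo_norm_eq_zero.1 hu))

/-- The cofactor `κ` of `π` in the value found by Minkowski's theorem satisfies `|N κ| ≤ 3√2`,
hence is a unit times a power of `√2`. -/
lemma isForm_neg_of_isSquare {p : ℕ} (hp : p ≠ 0) {π : ℤ√2} (hN : π.norm = p)
    {φ : ℤ√2 →+* ZMod p} (hφ : ∀ a, φ a = 0 ↔ π ∣ a) (hsq : IsSquare (φ ⟨2, 1⟩)) :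
    IsForm (-π) := by
  have htwo : TotPos ⟨2, 1⟩ := totPos_of_re_pos_of_norm_pos (by norm_num) (by decide)
  obtain ⟨v, u, hvu, hφvu, hle⟩ := exists_norm_sq_le_of_isSquare hp φ htwo hsq
  obtain ⟨κ, hκ⟩ := (hφ _).1 hφvu
  have hκ0 : κ ≠ 0 := by
    rintro rfl
    exact sq_ne_two_add_sqrtd_mul_sq hvu (by rwa [mul_zero, sub_eq_zero] at hκ)
  have hκle : κ.norm ^ 2 ≤ 18 := by
    have h2 : (⟨2, 1⟩ : ℤ√2).norm = 2 := rfl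
    have hp2 : (0 : ℤ) < p ^ 2 := by positivity
    rw [hκ, Zsqrtd.norm_mul, hN, h2, mul_pow] at hle
    exact le_of_mul_le_mul_left (hle.trans_eq (by ring)) hp2
  have hκlt : |κ.norm| < 5 := abs_lt_of_sq_lt_sq (by linarith) (by norm_num)
  have hκform := isForm_of_abs_norm_le_four hκ0 (Int.lt_add_one_iff.1 hκlt)
  have hπκ : IsForm (π * κ) := ⟨1, v, u, one_ne_zero, by rw [← hκ, one_pow, mul_one]⟩
  have heq : -1 * (π * κ) * κ = -π * κ ^ 2 := by ring
  exact .of_mul_sq hκ0 (heq ▸ (isForm_neg_one.mul hπκ).mul hκform)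

/-! ### The class of the ideal above `√2` as a square -/

namespace IsConjugation

variable {R O : Type*} [CommRing R] [CommRing O] [IsDedekindDomain O] [Algebra R O] {σ : O ≃ₐ[R] O}

/-- Remove the greatest common divisor. -/
lemma exists_eq_mul_of_mul_map_eq_mul_map {I J : Ideal O} (hJ : J ≠ ⊥)
    (h : I * I.map σ = J * J.map σ) : ∃ E B, I = E * B.map σ ∧ J = E * B := by
  have hE : I ⊔ J ≠ ⊥ := ne_bot_of_le_ne_bot hJ le_sup_right
  obtain ⟨A, hA⟩ : I ⊔ J ∣ I := Ideal.dvd_iff_le.2 le_sup_left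
  obtain ⟨B, hB⟩ : I ⊔ J ∣ J := Ideal.dvd_iff_le.2 le_sup_right
  have hAB : IsCoprime A B := by
    rw [Ideal.isCoprime_iff_sup_eq]
    apply mul_left_cancel₀ hE
    rw [Ideal.mul_sup, ← hA, ← hB, Ideal.mul_top]
  have hAB' : IsCoprime (A.map σ) (B.map σ) := by
    rw [Ideal.isCoprime_iff_sup_eq, ← Ideal.map_sup, Ideal.isCoprime_iff_sup_eq.1 hAB,
      Ideal.map_top]
  have hnorm : A * A.map σ = B * B.map σ := by
    apply mul_left_cancel₀ (mul_ne_zero hE (map_ne_bot (σ := σ) hE))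
    calc (I ⊔ J) * (I ⊔ J).map σ * (A * A.map σ)
        = (I ⊔ J) * A * ((I ⊔ J) * A).map σ := by rw [Ideal.map_mul]; ring
      _ = (I ⊔ J) * B * ((I ⊔ J) * B).map σ := by rw [← hA, ← hB, h]
      _ = (I ⊔ J) * (I ⊔ J).map σ * (B * B.map σ) := by rw [Ideal.map_mul]; ring
  have hAσB : A = B.map σ := dvd_antisymm (hAB.dvd_of_dvd_mul_left (Dvd.intro _ hnorm))
    (hAB'.symm.dvd_of_dvd_mul_right (Dvd.intro_left _ hnorm.symm))
  exact ⟨I ⊔ J, B, hAσB ▸ hA, hB⟩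

lemma exists_idealClass_eq_sq_of_mul_map_eq_span [IsPrincipalIdealRing R] (hσ : IsConjugation σ)
    {x : O} {J : Ideal O} (hJ : J ≠ ⊥) (h : J * J.map σ = Ideal.span {x * σ x}) :
    ∃ g, idealClass J hJ = g ^ 2 := by
  obtain ⟨E, B, hE, rfl⟩ := exists_eq_mul_of_mul_map_eq_mul_map (σ := σ) (I := Ideal.span {x}) hJ
    (by rw [map_span_singleton, Ideal.span_singleton_mul_span_singleton, h])
  have hE0 : E ≠ ⊥ := left_ne_zero_of_mul hJ
  have hB0 : B ≠ ⊥ := right_ne_zero_of_mul hJ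
  have hEB : idealClass E hE0 * idealClass (B.map σ) (map_ne_bot hB0) = 1 := by
    rw [← idealClass_mul, idealClass_eq_one_iff]
    exact ⟨x, hE.symm⟩
  have hclass := mul_right_cancel (hEB.trans (hσ.idealClass_mul_idealClass_map hB0).symm)
  exact ⟨idealClass B hB0, by rw [idealClass_mul hE0 hB0, hclass, sq]⟩

end IsConjugation

namespace IsSqrtNeg

lemma mul_map_add_mul_self {R O : Type*} [CommRing R] [CommRing O] [Algebra R O] {σ : O ≃ₐ[R] O}
    {π : R} {Z : O} (h : IsSqrtNeg σ π Z) (a b : R) :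
    (algebraMap R O a + algebraMap R O b * Z) * σ (algebraMap R O a + algebraMap R O b * Z) =
      algebraMap R O (a ^ 2 + π * b ^ 2) := by
  simp only [map_add, map_mul, map_pow, σ.commutes, h.map_eq_neg]
  linear_combination -algebraMap R O b ^ 2 * h.sq_eq

lemma exists_idealClass_eq_sq {O : Type*} [CommRing O] [IsDedekindDomain O] [Algebra (ℤ√2) O]
    [FaithfulSMul (ℤ√2) O] {σ : O ≃ₐ[ℤ√2] O} {π : ℤ√2} {Z : O} (h : IsSqrtNeg σ π Z)
    (hpos : TotPos π) (hform : IsForm (-π)) {J : Ideal O} (hJ : J ≠ ⊥)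
    (hJr : J ^ 2 = Ideal.span {algebraMap (ℤ√2) O Zsqrtd.sqrtd}) :
    ∃ g, idealClass J hJ = g ^ 2 := by
  obtain ⟨e, x, y, he, hxy⟩ := hform
  have hy : y ≠ 0 := by
    rintro rfl
    have hval : realPlace x ^ 2 + realPlace π * realPlace e ^ 2 = 0 := by
      rw [← map_pow, ← map_pow, ← map_mul, ← map_add, map_eq_zero_iff _ realPlace_injective]
      linear_combination -hxy
    have hπe := mul_pos hpos.1 (map_pow realPlace e 2 ▸ (totPos_sq he).1)
    linarith [sq_nonneg (realPlace x)]
  have hyspan : Ideal.span {algebraMap (ℤ√2) O y} ≠ ⊥ :=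
    Ideal.span_singleton_eq_bot.not.2 (IsConjugation.algebraMap_ne_zero hy)
  have hspan : Ideal.span {algebraMap (ℤ√2) O ⟨2, 1⟩} = J ^ 2 := by
    have hu : IsUnit (⟨1, 1⟩ : ℤ√2) := zsqrtTwo_isUnit_iff.2 (Or.inr rfl)
    have hmul : (⟨2, 1⟩ : ℤ√2) = Zsqrtd.sqrtd * ⟨1, 1⟩ := rfl
    rw [hJr, hmul, map_mul, Ideal.span_singleton_mul_right_unit (hu.map _)]
  obtain ⟨g, hg⟩ := h.exists_idealClass_eq_sq_of_mul_map_eq_span (mul_ne_zero hyspan hJ)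
    (x := algebraMap (ℤ√2) O x + algebraMap (ℤ√2) O e * Z) (by
      have hnorm : x ^ 2 + π * e ^ 2 = ⟨2, 1⟩ * y ^ 2 := by linear_combination -hxy
      rw [h.mul_map_add_mul_self, hnorm, map_mul, map_pow, Ideal.map_mul,
        IsConjugation.map_span_singleton, σ.commutes,
        IsConjugation.map_eq_of_sq_eq_span_algebraMap hJr,
        ← Ideal.span_singleton_mul_span_singleton, hspan, ← Ideal.span_singleton_pow]
      ring)
  exact ⟨g, by rw [← hg, idealClass_mul hyspan hJ, idealClass_span_singleton, one_mul]⟩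

end IsSqrtNeg

/-! ### Abelian groups with at most one involution -/

section FiniteAbelian

variable {G : Type*} [CommGroup G] [Finite G]

lemma card_ker_powMonoidHom_pow_le {n : ℕ} (h : Nat.card (powMonoidHom n : G →* G).ker ≤ n)
    (k : ℕ) : Nat.card (powMonoidHom (n ^ k) : G →* G).ker ≤ n ^ k := by
  induction k with
  | zero => simp
  | succ k ih =>
    let f : G →* G := powMonoidHom n
    let K : Subgroup G := (powMonoidHom (n ^ (k + 1)) : G →* G).ker
    have hmap : K.map f ≤ (powMonoidHom (n ^ k) : G →* G).ker := by
      rintro _ ⟨g, hg, rfl⟩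
      rwa [MonoidHom.mem_ker, powMonoidHom_apply, powMonoidHom_apply, ← pow_mul, ← pow_succ']
    have hker : f.ker ≤ K := fun g hg => by
      rw [MonoidHom.mem_ker, powMonoidHom_apply] at hg ⊢
      rw [pow_succ', pow_mul, hg, one_pow]
    calc Nat.card K = Nat.card f.ker * Nat.card (K.map f) := by
          rw [← Subgroup.relIndex_bot_left, ← Subgroup.relIndex_bot_left, ← Subgroup.relIndex_ker,
            Subgroup.relIndex_mul_relIndex ⊥ _ _ bot_le hker]
      _ ≤ n * n ^ k := Nat.mul_le_mul h ((Subgroup.card_le_of_le hmap).trans ih)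
      _ = n ^ (k + 1) := (pow_succ' n k).symm

lemma isCyclic_of_isPGroup_of_card_ker_powMonoidHom_le {p : ℕ} [Fact p.Prime] (hG : IsPGroup p G)
    (h : Nat.card (powMonoidHom p : G →* G).ker ≤ p) : IsCyclic G := by
  obtain ⟨n, hn⟩ := hG.exists_card_eq
  obtain ⟨k, -, hk⟩ := (Nat.dvd_prime_pow Fact.out).1 (hn ▸ Group.exponent_dvd_nat_card (G := G))
  have htop : (powMonoidHom (p ^ k) : G →* G).ker = ⊤ :=
    eq_top_iff.2 fun g _ => hk ▸ Monoid.pow_exponent_eq_one g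
  refine .of_exponent_eq_card (le_antisymm (Nat.le_of_dvd Nat.card_pos Group.exponent_dvd_nat_card)
    ?_)
  calc Nat.card G = Nat.card (powMonoidHom (p ^ k) : G →* G).ker := by
        rw [htop, Subgroup.card_top]
    _ ≤ Monoid.exponent G := hk ▸ card_ker_powMonoidHom_pow_le h k

lemma isCyclic_sylow_of_card_ker_powMonoidHom_le {p : ℕ} [Fact p.Prime]
    (h : Nat.card (powMonoidHom p : G →* G).ker ≤ p) (P : Sylow p G) : IsCyclic P := by
  refine isCyclic_of_isPGroup_of_card_ker_powMonoidHom_le P.2 (le_trans ?_ h)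
  let f : (powMonoidHom p : P →* P).ker → (powMonoidHom p : G →* G).ker :=
    fun g => ⟨g, congrArg Subtype.val g.2⟩
  have hf : Function.Injective f := fun a b hab =>
    Subtype.ext (Subtype.ext (congrArg (fun x : (powMonoidHom p : G →* G).ker => (x : G)) hab))
  exact Nat.card_le_card_of_injective f hf

lemma card_ker_powMonoidHom_two_le {t : G} (h : ∀ g : G, g ^ 2 = 1 → g = 1 ∨ g = t) :
    Nat.card (powMonoidHom 2 : G →* G).ker ≤ 2 := by
  rw [← SetLike.coe_sort_coe, Nat.card_coe_set_eq]
  exact (Set.ncard_le_ncard h).trans ((Set.ncard_insert_le 1 {t}).trans_eq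
    (by rw [Set.ncard_singleton]))

lemma isCyclic_sylow_two {t : G} (h : ∀ g : G, g ^ 2 = 1 → g = 1 ∨ g = t) (P : Sylow 2 G) :
    IsCyclic P :=
  isCyclic_sylow_of_card_ker_powMonoidHom_le (card_ker_powMonoidHom_two_le h) P

lemma card_sylow_eq_one {p : ℕ} [Fact p.Prime] (h : ∀ g : G, g ^ p = 1 → g = 1)
    (P : Sylow p G) : Nat.card P = 1 := by
  refine P.2.card_eq_or_dvd.resolve_right fun hdvd => ?_
  obtain ⟨g, hg⟩ :=
    exists_prime_orderOf_dvd_card' p (hdvd.trans (Subgroup.card_subgroup_dvd_card _))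
  have hp : p = 1 := by rw [← hg, orderOf_eq_one_iff, h g (hg ▸ pow_orderOf_eq_one g)]
  exact (Fact.out : p.Prime).ne_one hp

lemma card_sylow_two_eq_two {t : G} (h : ∀ g : G, g ^ 2 = 1 → g = 1 ∨ g = t) (ht1 : t ≠ 1)
    (ht2 : t ^ 2 = 1) (ht : ∀ g : G, t ≠ g ^ 2) (P : Sylow 2 G) : Nat.card P = 2 := by
  have h2 : 2 ∣ Nat.card P :=
    P.dvd_card_of_dvd_card (orderOf_eq_prime ht2 ht1 ▸ orderOf_dvd_natCard t)
  have h4 : ¬4 ∣ Nat.card P := by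
    rintro ⟨m, hm⟩
    have := isCyclic_sylow_two h P
    obtain ⟨x, hx⟩ := IsCyclic.exists_ofOrder_eq_natCard (α := P)
    have hm0 : 0 < m := by
      have := Nat.card_pos (α := P)
      omega
    rw [hm, ← Subgroup.orderOf_coe] at hx
    rcases h ((x : G) ^ (2 * m)) (by rw [← pow_mul, ← pow_orderOf_eq_one (x : G), hx]; ring_nf)
      with h1 | h1
    · have := Nat.le_of_dvd (by omega) (orderOf_dvd_of_pow_eq_one h1)
      omega
    · exact ht (x ^ m) (by rw [← h1, ← pow_mul, mul_comm])
  obtain ⟨n, hn⟩ := P.2.exists_card_eq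
  rcases n with - | - | n
  · rw [hn] at h2
    exact absurd h2 (by decide)
  · exact hn
  · exact absurd (hn ▸ pow_dvd_pow 2 (Nat.le_add_left 2 n)) h4

lemma four_le_card_sylow_two {b : G} (hb : b ^ 2 ≠ 1) (hb4 : (b ^ 2) ^ 2 = 1) (P : Sylow 2 G) :
    4 ≤ Nat.card P := by
  have horder : orderOf b = 2 ^ 2 := orderOf_eq_prime_pow (n := 1) (by rwa [pow_one])
    (by rwa [← pow_mul] at hb4)
  exact Nat.le_of_dvd Nat.card_pos
    (P.pow_dvd_card_of_pow_dvd_card (horder ▸ orderOf_dvd_natCard b))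

end FiniteAbelian

/-! ### The field `K` as a quadratic extension of `ℚ(√2)` -/

lemma exists_map_eq_of_isIntegral {R L : Type*} [CommRing R] [IsDomain R] [IsIntegrallyClosed R]
    [Field L] {f : R →+* L} (hf : Function.Injective f) {x : L} (hx : IsIntegral ℤ x) {a b : R}
    (hb : b ≠ 0) (h : f b * x = f a) : ∃ y, f y = x := by
  let g : FractionRing R →+* L := IsFractionRing.lift hf
  have hg (c : R) : g (algebraMap _ _ c) = f c := IsFractionRing.lift_algebraMap hf c
  let q : FractionRing R := algebraMap _ _ a / algebraMap _ _ b
  have hq : g q = x := by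
    rw [map_div₀, hg, hg, ← h, mul_div_cancel_left₀ x ((map_ne_zero_iff f hf).2 hb)]
  have hint : IsIntegral R q := by
    obtain ⟨P, hP, hP0⟩ := hx
    refine ⟨P.map (Int.castRingHom R), hP.map _, g.injective ?_⟩
    rw [Polynomial.hom_eval₂, Polynomial.eval₂_map, hq, map_zero, ← hP0]
    congr 1
    exact Subsingleton.elim _ _
  obtain ⟨y, hy⟩ := IsIntegrallyClosed.isIntegral_iff.1 hint
  exact ⟨y, by rw [← hg, hy, hq]⟩

lemma exists_coords_of_mem_adjoin {R L : Type*} [CommRing R] [Field L] [Algebra ℚ L] {f : R →+* L}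
    {r : R} {z : L} (hzalg : IsAlgebraic ℚ z) (hz : z ^ 2 = f r) {x : L} (hx : x ∈ ℚ⟮z⟯) :
    ∃ n : ℤ, n ≠ 0 ∧ ∃ a b, n * x = f a + f b * z := by
  rw [← mem_toSubalgebra, adjoin_simple_toSubalgebra_of_isAlgebraic hzalg] at hx
  induction hx using Algebra.adjoin_induction with
  | mem x hx =>
    obtain rfl : x = z := hx
    exact ⟨1, one_ne_zero, 0, 1, by simp⟩
  | algebraMap q =>
    refine ⟨q.den, by exact_mod_cast q.den_nz, q.num, 0, ?_⟩
    rw [map_intCast, map_zero, zero_mul, add_zero, ← map_intCast (algebraMap ℚ L),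
      ← map_intCast (algebraMap ℚ L), ← map_mul]
    exact congrArg _ (by exact_mod_cast q.den_mul_eq_num)
  | add x y _ _ hx hy =>
    obtain ⟨n, hn, a, b, h⟩ := hx
    obtain ⟨m, hm, a', b', h'⟩ := hy
    refine ⟨n * m, mul_ne_zero hn hm, m * a + n * a', m * b + n * b', ?_⟩
    simp only [map_add, map_mul, map_intCast, Int.cast_mul]
    linear_combination (m : L) * h + (n : L) * h'
  | mul x y _ _ hx hy =>
    obtain ⟨n, hn, a, b, h⟩ := hx
    obtain ⟨m, hm, a', b', h'⟩ := hy
    refine ⟨n * m, mul_ne_zero hn hm, a * a' + b * b' * r, a * b' + b * a', ?_⟩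
    simp only [map_add, map_mul, Int.cast_mul]
    linear_combination m * y * h + (f a + f b * z) * h' + f b * f b' * hz

lemma exists_algebraMap_ringOfIntegers_eq {F : IntermediateField ℚ ℂ} {x : ℂ} (hx : x ∈ F)
    (hi : IsIntegral ℤ x) : ∃ y : 𝓞 F, algebraMap (𝓞 F) ℂ y = x :=
  ⟨⟨⟨x, hx⟩, (isIntegral_algHom_iff (F.val.restrictScalars ℤ) F.val.injective).1 hi⟩, rfl⟩

/-- The embedding of `ℤ[√2]` in `ℂ` with `√2 > 0`. -/
def complexPlace : ℤ√2 →+* ℂ := Complex.ofRealHom.comp realPlace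

lemma complexPlace_apply (a : ℤ√2) : complexPlace a = (realPlace a : ℂ) := rfl

lemma complexPlace_injective : Function.Injective complexPlace :=
  Complex.ofReal_injective.comp realPlace_injective

lemma complexPlace_eq (a : ℤ√2) : complexPlace a = a.re + a.im * (√2 : ℂ) := by
  rw [complexPlace_apply, realPlace_apply]
  push_cast
  rfl

lemma conj_complexPlace (a : ℤ√2) : starRingEnd ℂ (complexPlace a) = complexPlace a :=
  Complex.conj_ofReal _

lemma isIntegral_complexPlace (a : ℤ√2) : IsIntegral ℤ (complexPlace a) := by
  have hsqrt : IsIntegral ℤ (√2 : ℂ) := by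
    apply IsIntegral.of_pow two_pos
    rw [← Complex.ofReal_pow, Real.sq_sqrt zero_le_two]
    exact isIntegral_algebraMap (R := ℤ) (x := 2)
  rw [complexPlace_eq]
  exact isIntegral_algebraMap.add (isIntegral_algebraMap.mul hsqrt)

section Kfield

variable {π : ℤ√2} {z : ℂ}

lemma isIntegral_of_sq_eq_neg (hz : z ^ 2 = -complexPlace π) : IsIntegral ℤ z :=
  .of_pow two_pos (hz ▸ (isIntegral_complexPlace π).neg)

lemma numberField_Kfield (hz : z ^ 2 = -complexPlace π) : NumberField (Kfield z) :=
  have : FiniteDimensional ℚ (Kfield z) :=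
    adjoin.finiteDimensional (isIntegral_of_sq_eq_neg hz).tower_top
  ⟨⟩

lemma conj_eq_neg (hpos : 0 < realPlace π) (hz : z ^ 2 = -complexPlace π) :
    starRingEnd ℂ z = -z := by
  have h : (starRingEnd ℂ z) ^ 2 = z ^ 2 := by
    rw [← map_pow, hz, map_neg, conj_complexPlace]
  refine (sq_eq_sq_iff_eq_or_eq_neg.1 h).resolve_left fun hreal => ?_
  obtain ⟨r, rfl⟩ := Complex.conj_eq_iff_real.1 hreal
  have hr : r ^ 2 = -realPlace π := by
    rw [complexPlace_apply] at hz
    exact_mod_cast hz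
  linarith [sq_nonneg r]

lemma self_mem_Kfield (z : ℂ) : z ∈ Kfield z := mem_adjoin_simple_self ℚ z

lemma complexPlace_mem_Kfield (him : π.im ≠ 0) (hz : z ^ 2 = -complexPlace π) (a : ℤ√2) :
    complexPlace a ∈ Kfield z := by
  have him' : (π.im : ℂ) ≠ 0 := Int.cast_ne_zero.2 him
  have hsqrt : (√2 : ℂ) = (-z ^ 2 - π.re) / π.im := by
    rw [hz, complexPlace_eq]
    field_simp
    ring
  rw [complexPlace_eq, hsqrt]
  have hnum := sub_mem (neg_mem (pow_mem (self_mem_Kfield z) 2)) (intCast_mem _ π.re)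
  exact add_mem (intCast_mem _ _)
    (mul_mem (intCast_mem _ _) (div_mem hnum (intCast_mem _ _)))

lemma conj_mem_Kfield (hconj : starRingEnd ℂ z = -z) {x : ℂ} (hx : x ∈ Kfield z) :
    starRingEnd ℂ x ∈ Kfield z := by
  have hle : Kfield z ≤
      (Kfield z).comap (Complex.conjAe.restrictScalars ℚ : ℂ ≃ₐ[ℚ] ℂ).toAlgHom := by
    refine adjoin_simple_le_iff.2 ?_
    change starRingEnd ℂ z ∈ Kfield z
    exact hconj ▸ neg_mem (self_mem_Kfield z)
  exact hle hx

/-- Complex conjugation on `K`, given that `z` is purely imaginary. -/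
def conjKfield (hconj : starRingEnd ℂ z = -z) : Kfield z ≃+* Kfield z where
  toFun x := ⟨starRingEnd ℂ x, conj_mem_Kfield hconj x.2⟩
  invFun x := ⟨starRingEnd ℂ x, conj_mem_Kfield hconj x.2⟩
  left_inv _ := Subtype.ext (Complex.conj_conj _)
  right_inv _ := Subtype.ext (Complex.conj_conj _)
  map_mul' _ _ := Subtype.ext (map_mul _ _ _)
  map_add' _ _ := Subtype.ext (map_add _ _ _)

lemma algebraMap_mapRingEquiv_conjKfield (hconj : starRingEnd ℂ z = -z) (x : 𝓞 (Kfield z)) :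
    algebraMap (𝓞 (Kfield z)) ℂ (RingOfIntegers.mapRingEquiv (conjKfield hconj) x) =
      starRingEnd ℂ (algebraMap _ ℂ x) := rfl

lemma exists_ringHom_ringOfIntegers_Kfield (him : π.im ≠ 0) (hz : z ^ 2 = -complexPlace π) :
    ∃ ι : ℤ√2 →+* 𝓞 (Kfield z), ∀ a, algebraMap (𝓞 (Kfield z)) ℂ (ι a) = complexPlace a := by
  obtain ⟨r, hr⟩ := exists_algebraMap_ringOfIntegers_eq
    (complexPlace_mem_Kfield him hz .sqrtd) (isIntegral_complexPlace _)
  have hr2 : r * r = (2 : ℤ) := FaithfulSMul.algebraMap_injective _ ℂ (by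
    rw [map_mul, hr, ← map_mul, Zsqrtd.dmuld, map_intCast, map_intCast])
  refine ⟨Zsqrtd.lift ⟨r, hr2⟩, fun a => ?_⟩
  rw [Zsqrtd.lift_apply_apply, map_add, map_mul, hr, map_intCast, map_intCast, complexPlace_eq,
    complexPlace_eq]
  simp only [Zsqrtd.re_sqrtd, Zsqrtd.im_sqrtd, Int.cast_zero, zero_add, Int.cast_one, one_mul]

lemma exists_complexPlace_eq_of_conj_eq (hconj : starRingEnd ℂ z = -z)
    (hz : z ^ 2 = -complexPlace π) {x : ℂ} (hx : x ∈ Kfield z) (hi : IsIntegral ℤ x)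
    (hxconj : starRingEnd ℂ x = x) : ∃ a, complexPlace a = x := by
  obtain ⟨n, hn, a, b, h⟩ := exists_coords_of_mem_adjoin
    (isIntegral_of_sq_eq_neg hz).tower_top.isAlgebraic (hz.trans (map_neg _ _).symm) hx
  have h' := congrArg (starRingEnd ℂ) h
  simp only [map_mul, map_add, map_intCast, hxconj, hconj, conj_complexPlace] at h'
  refine exists_map_eq_of_isIntegral complexPlace_injective hi (a := a) (b := n)
    (Int.cast_ne_zero.2 hn) ?_
  rw [map_intCast]
  linear_combination (h + h') / 2

lemma exists_isSqrtNeg_ringOfIntegers_Kfield (hpos : 0 < realPlace π) (him : π.im ≠ 0)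
    (hz : z ^ 2 = -complexPlace π) :
    ∃ (_ : Algebra (ℤ√2) (𝓞 (Kfield z))) (_ : FaithfulSMul (ℤ√2) (𝓞 (Kfield z)))
      (σ : 𝓞 (Kfield z) ≃ₐ[ℤ√2] 𝓞 (Kfield z)) (Z : 𝓞 (Kfield z)), IsSqrtNeg σ π Z := by
  have hinj := FaithfulSMul.algebraMap_injective (𝓞 (Kfield z)) ℂ
  have hconj := conj_eq_neg hpos hz
  obtain ⟨ι, hι⟩ := exists_ringHom_ringOfIntegers_Kfield him hz
  obtain ⟨Z, hZ⟩ := exists_algebraMap_ringOfIntegers_eq (self_mem_Kfield z)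
    (isIntegral_of_sq_eq_neg hz)
  algebraize [ι]
  have hfaithful : FaithfulSMul (ℤ√2) (𝓞 (Kfield z)) :=
    (faithfulSMul_iff_algebraMap_injective _ _).2
      fun a b hab => complexPlace_injective (by rw [← hι, ← hι]; exact congrArg _ hab)
  let σ : 𝓞 (Kfield z) ≃ₐ[ℤ√2] 𝓞 (Kfield z) :=
    .ofRingEquiv (f := RingOfIntegers.mapRingEquiv (conjKfield hconj)) fun a => hinj (by
      rw [algebraMap_mapRingEquiv_conjKfield]
      exact (hι a).symm ▸ conj_complexPlace a)
  have hσ (x : 𝓞 (Kfield z)) : algebraMap _ ℂ (σ x) = starRingEnd ℂ (algebraMap _ ℂ x) :=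
    algebraMap_mapRingEquiv_conjKfield hconj x
  refine ⟨inferInstance, hfaithful, σ, Z, ⟨fun x => hinj ?_, fun x hx => ?_⟩, hinj ?_, hinj ?_⟩
  · rw [hσ, hσ, Complex.conj_conj]
  · obtain ⟨a, ha⟩ := exists_complexPlace_eq_of_conj_eq hconj hz (x : Kfield z).2
      ((RingOfIntegers.isIntegral_coe x).map ((Kfield z).val.restrictScalars ℤ))
      ((hσ x).symm.trans (congrArg _ hx))
    exact ⟨a, hinj ((hι a).trans ha)⟩
  · rw [hσ, map_neg, hZ, hconj]
  · rw [map_neg, map_pow, hZ, hz]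
    exact congrArg _ (hι π).symm

end Kfield

/-! ### The Sylow 2-subgroup of the class group -/

lemma ne_bot_of_pow_eq_span_singleton {R : Type*} [CommRing R] {I : Ideal R} {x : R} {n : ℕ}
    (hn : n ≠ 0) (hx : x ≠ 0) (h : I ^ n = Ideal.span {x}) : I ≠ ⊥ := by
  rintro rfl
  rw [Ideal.bot_pow hn, eq_comm, Ideal.span_singleton_eq_bot] at h
  exact hx h

namespace IsSqrtNeg

variable {O : Type*} [CommRing O] [IsDedekindDomain O] [Algebra (ℤ√2) O] [FaithfulSMul (ℤ√2) O]
  {σ : O ≃ₐ[ℤ√2] O} {π : ℤ√2} {Z : O}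

lemma eq_one_or_eq_idealClass (h : IsSqrtNeg σ π Z) (hπ : Prime π) (hpos : TotPos π)
    {J : Ideal O} (hJ : J ≠ ⊥) (hJr : J ^ 2 = Ideal.span {algebraMap (ℤ√2) O Zsqrtd.sqrtd})
    {g : ClassGroup O} (hg : g ^ 2 = 1) : g = 1 ∨ g = idealClass J hJ := by
  refine (h.eq_one_or_exists_sq_eq_span_sqrtd hπ hpos hg).imp_right ?_
  rintro ⟨-, I, hI, hIr, hgI⟩
  obtain rfl : I = J := uniqueFactorizationMonoid_pow_injective two_ne_zero (hIr.trans hJr.symm)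
  exact hgI

lemma exists_idealClass_of_four_dvd_sub_one (h : IsSqrtNeg σ π Z) (hπ : Prime π)
    (hpos : TotPos π) (h17 : 17 ≤ π.norm) (hπ4 : 4 ∣ π - 1) :
    ∃ (J : Ideal O) (hJ : J ≠ ⊥), J ^ 2 = Ideal.span {algebraMap (ℤ√2) O Zsqrtd.sqrtd} ∧
      idealClass J hJ ≠ 1 ∧ idealClass J hJ ^ 2 = 1 := by
  have hr : algebraMap (ℤ√2) O Zsqrtd.sqrtd ≠ 0 :=
    IsConjugation.algebraMap_ne_zero prime_sqrtd_two.ne_zero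
  obtain ⟨J, hJr⟩ := h.exists_sq_eq_span_of_sq_eq_two hr
    (by rw [← map_pow, sqrtd_two_sq, map_ofNat]) hπ4
  have hJ := ne_bot_of_pow_eq_span_singleton two_ne_zero hr hJr
  exact ⟨J, hJ, hJr, h.idealClass_ne_one_of_sq_eq_span_sqrtd hπ hpos h17 hJ hJr,
    idealClass_sq_eq_one hJ hJr⟩

variable [Finite (ClassGroup O)]

theorem isCyclic_sylow_two_classGroup (h : IsSqrtNeg σ π Z) (hπ : Prime π) (hpos : TotPos π)
    (P : Sylow 2 (ClassGroup O)) : IsCyclic P := by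
  by_cases htriv : ∀ g : ClassGroup O, g ^ 2 = 1 → g = 1
  · exact isCyclic_sylow_two (fun g hg => Or.inl (b := g = 1) (htriv g hg)) P
  · push Not at htriv
    obtain ⟨t, ht2, ht1⟩ := htriv
    obtain ⟨-, J, hJ, hJr, rfl⟩ :=
      (h.eq_one_or_exists_sq_eq_span_sqrtd hπ hpos ht2).resolve_left ht1
    exact isCyclic_sylow_two (fun _ => h.eq_one_or_eq_idealClass hπ hpos hJ hJr) P

theorem card_sylow_two_classGroup_eq_one (h : IsSqrtNeg σ π Z) (hπ : Prime π) (hpos : TotPos π)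
    (hπ4 : 4 ∣ π + 1) (P : Sylow 2 (ClassGroup O)) : Nat.card P = 1 :=
  card_sylow_eq_one (fun _ hg => (h.eq_one_or_exists_sq_eq_span_sqrtd hπ hpos hg).resolve_right
    fun h' => h'.1 hπ4) P

theorem card_sylow_two_classGroup_eq_two (h : IsSqrtNeg σ π Z) (hπ : Prime π) (hpos : TotPos π)
    (h17 : 17 ≤ π.norm) (hπ4 : 4 ∣ π - 1) {F : Type*} [Field F] {φ : ℤ√2 →+* F}
    (hφ : ∀ a, φ a = 0 ↔ π ∣ a) (hsq : ¬IsSquare (φ ⟨2, 1⟩)) (P : Sylow 2 (ClassGroup O)) :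
    Nat.card P = 2 := by
  obtain ⟨J, hJ, hJr, hJ1, hJ2⟩ := h.exists_idealClass_of_four_dvd_sub_one hπ hpos h17 hπ4
  exact card_sylow_two_eq_two (fun _ => h.eq_one_or_eq_idealClass hπ hpos hJ hJr) hJ1 hJ2
    (h.idealClass_ne_sq hπ hpos hφ hsq hJ hJr) P

theorem four_le_card_sylow_two_classGroup (h : IsSqrtNeg σ π Z) (hπ : Prime π) (hpos : TotPos π)
    (h17 : 17 ≤ π.norm) (hπ4 : 4 ∣ π - 1) (hform : IsForm (-π)) (P : Sylow 2 (ClassGroup O)) :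
    4 ≤ Nat.card P := by
  obtain ⟨J, hJ, hJr, hJ1, hJ2⟩ := h.exists_idealClass_of_four_dvd_sub_one hπ hpos h17 hπ4
  obtain ⟨b, hb⟩ := h.exists_idealClass_eq_sq hpos hform hJ hJr
  exact four_le_card_sylow_two (hb ▸ hJ1) (hb ▸ hJ2) P

end IsSqrtNeg

lemma norm_mk_four_mul {p : ℕ} {c d : ℤ} (hcd : (p : ℤ) = c ^ 2 - 32 * d ^ 2) :
    (⟨c, 4 * d⟩ : ℤ√2).norm = p := by
  rw [Zsqrtd.norm_def, hcd]
  ring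

lemma four_dvd_mk_sub_one {c : ℤ} (hc : c % 4 = 1) (d : ℤ) : 4 ∣ (⟨c, 4 * d⟩ : ℤ√2) - 1 :=
  (Zsqrtd.intCast_dvd 4 _).2 ⟨Int.dvd_self_sub_of_emod_eq hc, by simp⟩

lemma four_dvd_mk_add_one {c : ℤ} (hc : c % 4 = 3) (d : ℤ) : 4 ∣ (⟨c, 4 * d⟩ : ℤ√2) + 1 :=
  (Zsqrtd.intCast_dvd 4 _).2 ⟨by change 4 ∣ c + 1; omega, by simp⟩

lemma seventeen_le_of_prime_of_mod_eight {p : ℕ} (hp : p.Prime) (hp8 : p % 8 = 1) : 17 ≤ p := by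
  by_contra! hlt
  obtain rfl | rfl : p = 1 ∨ p = 9 := by omega
  all_goals norm_num at hp

theorem statement_13 (p : ℕ) (hp : p.Prime) (hp8 : p % 8 = 1)
    (c d : ℤ) (hc : 0 < c) (hd : 0 < d) (hcd : (p : ℤ) = c ^ 2 - 32 * d ^ 2)
    -- z = √(−π), π = c + 4d√2 :
    (z : ℂ) (hz : z ^ 2 = -((c : ℂ) + 4 * (d : ℂ) * (Real.sqrt 2 : ℂ))) :
    ∀ P : Sylow 2 (ClassGroup (𝓞 (Kfield z))),
      IsCyclic P ∧
      ((2 : ZMod p) ^ ((p - 1) / 4) = -(-1 : ZMod p) ^ ((p - 1) / 8) →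
        Nat.card P = 1) ∧
      (((2 : ZMod p) ^ ((p - 1) / 4) = -1 ∧ (-1 : ℤ) ^ ((p - 1) / 8) = -1) →
        Nat.card P = 2) ∧
      (((2 : ZMod p) ^ ((p - 1) / 4) = 1 ∧ (-1 : ℤ) ^ ((p - 1) / 8) = 1) →
        4 ≤ Nat.card P) := by
  intro P
  let π : ℤ√2 := ⟨c, 4 * d⟩
  have hN : π.norm = p := norm_mk_four_mul hcd
  have hπ : Prime π := prime_of_prime_natAbs_norm (by rwa [hN, Int.natAbs_natCast])
  have hpos : TotPos π := totPos_of_re_pos_of_norm_pos hc (hN ▸ Int.natCast_pos.2 hp.pos)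
  have h17 : 17 ≤ π.norm := hN ▸ Nat.ofNat_le_cast.2 (seventeen_le_of_prime_of_mod_eight hp hp8)
  have hzπ : z ^ 2 = -complexPlace π := by
    simp only [hz, π, complexPlace_eq, Int.cast_mul, Int.cast_ofNat]
  have := numberField_Kfield hzπ
  have := Fact.mk hp
  obtain ⟨_, _, σ, Z, h⟩ :=
    exists_isSqrtNeg_ringOfIntegers_Kfield hpos.1 (mul_ne_zero four_ne_zero hd.ne') hzπ
  obtain ⟨φ, hφ⟩ := exists_residue_hom hp hN
  have hsq := isSquare_two_add_sqrtd_iff hp hp8 hd hcd ((hφ π).2 dvd_rfl)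
  have hπ4 (h2 : (2 : ZMod p) ^ ((p - 1) / 4) = (-1) ^ ((p - 1) / 8)) : 4 ∣ π - 1 :=
    four_dvd_mk_sub_one (mod_four_eq_one_of_two_pow_eq hp hp8 hc hd hcd h2) d
  refine ⟨h.isCyclic_sylow_two_classGroup hπ hpos P, fun hne => ?_, ?_, ?_⟩
  · have hc4 := mod_four_eq_three_of_two_pow_eq_neg hp hp8 hc hd hcd hne
    exact h.card_sylow_two_classGroup_eq_one hπ hpos (four_dvd_mk_add_one hc4 d) P
  · rintro ⟨h2, h1⟩
    have h12 := congrArg (Int.cast : ℤ → ZMod p) h1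
    exact h.card_sylow_two_classGroup_eq_two hπ hpos h17 (hπ4 (by simpa [h2] using h12.symm)) hφ
      (by rw [hsq, h1]; decide) P
  · rintro ⟨h2, h1⟩
    have h12 := congrArg (Int.cast : ℤ → ZMod p) h1
    exact h.four_le_card_sylow_two_classGroup hπ hpos h17 (hπ4 (by simpa [h2] using h12.symm))
      (isForm_neg_of_isSquare hp.ne_zero hN hφ (hsq.2 h1)) P
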